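/- arXiv:1712.01167 — 5 statements merged into one kernel-verified Lean document; each statement's English description precedes it below -/
import Mathlib

section
/- Let F be a nonzero homogeneous polynomial of degree 3 in k[x₀,x₁,x₂,x₃] such that the cubic surface V(F) is smooth, and let ℓ be a projective line contained in V(F). If char k ≠ 2, then ℓ contains at most 2 Eckardt points of V(F). If char k = 2, then the number of Eckardt points of V(F) lying on ℓ is exactly 0, 1, or 5. -/
open MvPolynomial Matrix

/-- The polynomial `F(A·x)`, obtained from `F` by substituting
`xᵢ ↦ ∑ⱼ Aᵢⱼ xⱼ`. -/
noncomputable def substMatrix {k : Type*} [Field k] (A : Matrix (Fin 4) (Fin 4) k)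
    (F : MvPolynomial (Fin 4) k) : MvPolynomial (Fin 4) k :=
  aeval (fun i => ∑ j, C (A i j) * X j) F

/-- A matrix `A` leaves the cubic surface `V(F)` invariant if `F(A·x) = λ·F(x)`
for some `λ ∈ kˣ`. -/
def LeavesInvariant {k : Type*} [Field k] (A : Matrix (Fin 4) (Fin 4) k)
    (F : MvPolynomial (Fin 4) k) : Prop :=
  ∃ lam : kˣ, substMatrix A F = (lam : k) • F

/-- `F` vanishes identically on the linear subspace `W ⊆ k⁴`. -/
def VanishesOn {k : Type*} [Field k] (F : MvPolynomial (Fin 4) k)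
    (W : Submodule k (Fin 4 → k)) : Prop :=
  ∀ x ∈ W, eval x F = 0

/-- `W` is (the cone over) a projective line contained in the surface `V(F)`. -/
def IsLineIn {k : Type*} [Field k] (F : MvPolynomial (Fin 4) k)
    (W : Submodule k (Fin 4 → k)) : Prop :=
  Module.finrank k W = 2 ∧ VanishesOn F W

/-- `L`, a 1-dimensional subspace of `k⁴` regarded as a point of `ℙ³(k)`, is an
Eckardt point of `V(F)`: at least three distinct projective lines contained in
`V(F)` pass through it. -/
def IsEckardtPoint {k : Type*} [Field k] (F : MvPolynomial (Fin 4) k)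
    (L : Submodule k (Fin 4 → k)) : Prop :=
  Module.finrank k L = 1 ∧
    ∃ W₁ W₂ W₃ : Submodule k (Fin 4 → k),
      W₁ ≠ W₂ ∧ W₁ ≠ W₃ ∧ W₂ ≠ W₃ ∧
      IsLineIn F W₁ ∧ IsLineIn F W₂ ∧ IsLineIn F W₃ ∧
      L ≤ W₁ ∧ L ≤ W₂ ∧ L ≤ W₃

namespace Eck

section Tri
variable {k V : Type*} [Field k] [AddCommGroup V] [Module k V]

/-- The cubic form of a trilinear form. -/
def f (C : V →ₗ[k] V →ₗ[k] V →ₗ[k] k) (x : V) : k := C x x x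
/-- Its derivative at `x` in direction `v`. -/
def D (C : V →ₗ[k] V →ₗ[k] V →ₗ[k] k) (x v : V) : k := C v x x + C x v x + C x x v
/-- Its full polarization. -/
def T (C : V →ₗ[k] V →ₗ[k] V →ₗ[k] k) (x y v : V) : k :=
  C v x y + C v y x + C x v y + C y v x + C x y v + C y x v

variable (C : V →ₗ[k] V →ₗ[k] V →ₗ[k] k)

lemma f_add (x y : V) : f C (x + y) = f C x + D C x y + D C y x + f C y := by
  simp [f, D]; ring
lemma f_smul (c : k) (x : V) : f C (c • x) = c ^ 3 * f C x := by
  simp [f]; ring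
lemma D_add_left (x y v : V) : D C (x + y) v = D C x v + D C y v + T C x y v := by
  simp [D, T]; ring
lemma D_smul_left (c : k) (x v : V) : D C (c • x) v = c ^ 2 * D C x v := by
  simp [D]; ring
lemma D_add_right (x v w : V) : D C x (v + w) = D C x v + D C x w := by
  simp [D]; ring
lemma D_smul_right (c : k) (x v : V) : D C x (c • v) = c * D C x v := by
  simp [D]; ring
lemma T_add_1 (x y v w : V) : T C (x + w) y v = T C x y v + T C w y v := by
  simp [T]; ring
lemma T_add_2 (x y v w : V) : T C x (y + w) v = T C x y v + T C x w v := by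
  simp [T]; ring
lemma T_add_3 (x y v w : V) : T C x y (v + w) = T C x y v + T C x y w := by
  simp [T]; ring
lemma T_smul_1 (c : k) (x y v : V) : T C (c • x) y v = c * T C x y v := by
  simp [T]; ring
lemma T_smul_2 (c : k) (x y v : V) : T C x (c • y) v = c * T C x y v := by
  simp [T]; ring
lemma T_smul_3 (c : k) (x y v : V) : T C x y (c • v) = c * T C x y v := by
  simp [T]; ring
lemma T_self (x v : V) : T C x x v = 2 * D C x v := by
  simp [T, D]; ring
lemma T_comm12 (x y v : V) : T C x y v = T C y x v := by
  simp [T]; ring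
lemma T_comm23 (x y v : V) : T C x y v = T C x v y := by
  simp [T]; ring

lemma D_zero_of_line [Infinite k] {U : Submodule k V} (hU : ∀ x ∈ U, f C x = 0)
    {x y : V} (hx : x ∈ U) (hy : y ∈ U) : D C x y = 0 := by
  have key : ∀ c : k, c * D C x y + c ^ 2 * D C y x = 0 := by
    intro c
    have h := hU (x + c • y) (U.add_mem hx (U.smul_mem c hy))
    rw [f_add, f_smul, hU x hx, hU y hy, D_smul_right, D_smul_left] at h
    linear_combination h
  classical
  obtain ⟨c, hc⟩ := Infinite.exists_notMem_finset ({0, 1} : Finset k)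
  simp only [Finset.mem_insert, Finset.mem_singleton, not_or] at hc
  have h1 := key 1
  have h2 := key c
  have : c * (1 - c) * D C x y = 0 := by linear_combination h2 - c ^ 2 * h1
  rcases mul_eq_zero.1 this with h | h
  · rcases mul_eq_zero.1 h with h | h
    · exact absurd h hc.1
    · exact absurd (sub_eq_zero.1 h).symm hc.2
  · exact h

lemma T_zero_of_line [Infinite k] {U : Submodule k V} (hU : ∀ x ∈ U, f C x = 0)
    {x y z : V} (hx : x ∈ U) (hy : y ∈ U) (hz : z ∈ U) : T C x y z = 0 := by
  have h := D_zero_of_line C hU (U.add_mem hx hy) hz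
  rw [D_add_left, D_zero_of_line C hU hx hz, D_zero_of_line C hU hy hz] at h
  simpa using h

end Tri

section Lin
variable {k : Type*} [Field k]

lemma frame_gen {v n p q : Fin 4 → k} (h : LinearIndependent k ![v, n, p, q]) (x : Fin 4 → k) :
    ∃ a b c d : k, x = a • p + b • q + c • n + d • v := by
  have hs := h.span_eq_top_of_card_eq_finrank (by simp)
  have hx : x ∈ Submodule.span k (Set.range ![v, n, p, q]) := by rw [hs]; trivial
  rw [Submodule.mem_span_range_iff_exists_fun] at hx
  obtain ⟨c, hc⟩ := hx
  refine ⟨c 2, c 3, c 1, c 0, ?_⟩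
  rw [← hc]
  simp [Fin.sum_univ_four]
  abel

lemma pair_gen {W : Submodule k (Fin 4 → k)} (hW : Module.finrank k W = 2) {p q : Fin 4 → k}
    (hp : p ∈ W) (hq : q ∈ W) (h : LinearIndependent k ![p, q]) :
    Submodule.span k (Set.range ![p, q]) = W := by
  apply Submodule.eq_of_le_of_finrank_le
  · rw [Submodule.span_le]
    rintro _ ⟨i, rfl⟩
    fin_cases i
    · exact hp
    · exact hq
  · rw [hW, finrank_span_eq_card h]; simp

lemma mem_span_pair' {p q x : Fin 4 → k} :
    x ∈ Submodule.span k (Set.range ![p, q]) ↔ ∃ a b : k, x = a • p + b • q := by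
  rw [Submodule.mem_span_range_iff_exists_fun]
  constructor
  · rintro ⟨c, hc⟩
    exact ⟨c 0, c 1, by rw [← hc]; simp [Fin.sum_univ_two]⟩
  · rintro ⟨a, b, h⟩
    exact ⟨![a, b], by simp [Fin.sum_univ_two, h]⟩

lemma pair_gen' {W : Submodule k (Fin 4 → k)} (hW : Module.finrank k W = 2) {p q : Fin 4 → k}
    (hp : p ∈ W) (hq : q ∈ W) (h : LinearIndependent k ![p, q]) {w : Fin 4 → k} (hw : w ∈ W) :
    ∃ a b : k, w = a • p + b • q := by
  rw [← pair_gen hW hp hq h] at hw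
  exact mem_span_pair'.1 hw

lemma exists_frame {W : Submodule k (Fin 4 → k)} (hW : Module.finrank k W = 2) {p q n : Fin 4 → k}
    (hp : p ∈ W) (hq : q ∈ W) (h : LinearIndependent k ![p, q]) (hn : n ∉ W) :
    ∃ v, LinearIndependent k ![v, n, p, q] := by
  have h3 : LinearIndependent k ![n, p, q] := by
    refine linearIndependent_finCons.2 ⟨h, ?_⟩
    rwa [pair_gen hW hp hq h]
  exact exists_linearIndependent_cons_of_lt_finrank h3 (by simp)

lemma exists_second {W : Submodule k (Fin 4 → k)} (hW : Module.finrank k W = 2) {p : Fin 4 → k}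
    (hp : p ∈ W) (h0 : p ≠ 0) : ∃ q ∈ W, LinearIndependent k ![p, q] := by
  have : ∃ q ∈ W, q ∉ Submodule.span k {p} := by
    by_contra! hc
    have h1 : W ≤ Submodule.span k {p} := hc
    have := Submodule.finrank_mono h1
    rw [hW, finrank_span_singleton h0] at this
    omega
  obtain ⟨q, hq, hqp⟩ := this
  refine ⟨q, hq, ?_⟩
  rw [LinearIndependent.pair_iff' h0]
  intro a ha
  exact hqp (ha ▸ Submodule.smul_mem _ _ (Submodule.mem_span_singleton_self p))

lemma exists_out {W : Submodule k (Fin 4 → k)} (hW : Module.finrank k W = 2) :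
    ∃ p ∈ W, p ≠ 0 := by
  have : W ≠ ⊥ := by rintro rfl; simp at hW
  exact (Submodule.ne_bot_iff W).1 this

lemma frame_notMem {W : Submodule k (Fin 4 → k)} (hW : Module.finrank k W = 2) {p q n v : Fin 4 → k}
    (hp : p ∈ W) (hq : q ∈ W) (h : LinearIndependent k ![v, n, p, q]) {c d : k}
    (hcd : c ≠ 0 ∨ d ≠ 0) : c • n + d • v ∉ W := by
  have h2 : LinearIndependent k ![p, q] :=
    (linearIndependent_finCons.1 (linearIndependent_finCons.1 h).1).1
  intro hm
  obtain ⟨a, b, hab⟩ := pair_gen' hW hp hq h2 hm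
  have h' := Fintype.linearIndependent_iff.1 h ![d, c, -a, -b] (by
    simp [Fin.sum_univ_four]
    have : d • v + (c • n + (-(a • p) + -(b • q))) = (c • n + d • v) - (a • p + b • q) := by abel
    first
      | rw [this, hab, sub_self]
      | (rw [← sub_eq_zero] at hab; rw [← hab]; abel))
  have h0 : d = 0 := h' 0
  have h1 : c = 0 := h' 1
  rcases hcd with h | h
  · exact h h1
  · exact h h0

lemma exists_quad_root [IsAlgClosed k] {a : k} (ha : a ≠ 0) (b c : k) :
    ∃ r : k, a * r ^ 2 + b * r + c = 0 := by
  obtain ⟨r, hr⟩ := IsAlgClosed.exists_root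
    (Polynomial.C a * Polynomial.X ^ 2 + Polynomial.C b * Polynomial.X + Polynomial.C c)
    (by rw [Polynomial.degree_quadratic ha]; decide)
  exact ⟨r, by simpa using hr⟩

lemma exists_form_zero [IsAlgClosed k] (a b c : k) :
    ∃ x y : k, (x ≠ 0 ∨ y ≠ 0) ∧ a * x ^ 2 + b * (x * y) + c * y ^ 2 = 0 := by
  by_cases ha : a = 0
  · exact ⟨1, 0, by simp, by simp [ha]⟩
  · obtain ⟨r, hr⟩ := exists_quad_root ha b c
    exact ⟨r, 1, by simp, by linear_combination hr⟩

end Lin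

section Exist
variable {k : Type*} [Field k]

/-- `F` is the cubic form of the trilinear form `C`. -/
def Rep (F : MvPolynomial (Fin 4) k)
    (C : (Fin 4 → k) →ₗ[k] (Fin 4 → k) →ₗ[k] (Fin 4 → k) →ₗ[k] k) : Prop :=
  (∀ x, eval x F = f C x) ∧ ∀ x v, ∑ i, v i * eval x (pderiv i F) = D C x v

lemma rep_add {F G : MvPolynomial (Fin 4) k} {C C'} (h : Rep F C) (h' : Rep G C') :
    Rep (F + G) (C + C') := by
  refine ⟨fun x => ?_, fun x v => ?_⟩
  · rw [map_add, h.1, h'.1]; simp [f]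
  · simp only [map_add, mul_add, Finset.sum_add_distrib, h.2, h'.2]; simp [D]; ring

lemma rep_zero : Rep (0 : MvPolynomial (Fin 4) k) 0 := by
  refine ⟨fun x => ?_, fun x v => ?_⟩ <;> simp [f, D]

lemma rep_mon (a : k) (i j l : Fin 4) :
    Rep (MvPolynomial.C a * (X i * (X j * X l)) : MvPolynomial (Fin 4) k)
      (a • (LinearMap.proj i : (Fin 4 → k) →ₗ[k] k).smulRight
        ((LinearMap.proj j : (Fin 4 → k) →ₗ[k] k).smulRight
          (LinearMap.proj l : (Fin 4 → k) →ₗ[k] k))) := by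
  have key : ∀ (x v : Fin 4 → k) (i : Fin 4), ∑ m, v m * (Pi.single m (1 : k) : Fin 4 → k) i = v i := by
    intro x v i
    simp [Pi.single_apply]
  refine ⟨fun x => ?_, fun x v => ?_⟩
  · simp [f]
  · simp only [D, Derivation.leibniz, pderiv_C, pderiv_X, smul_eq_mul, map_add, map_mul, eval_C,
      eval_X, mul_zero, add_zero, mul_add, Finset.sum_add_distrib, map_zero]
    have e : ∀ (m i : Fin 4), eval x ((Pi.single m 1 : Fin 4 → MvPolynomial (Fin 4) k) i)
        = (Pi.single m (1 : k) : Fin 4 → k) i := by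
      intro m i
      simp only [Pi.single_apply]; split_ifs <;> simp
    have e' : ∀ (m i : Fin 4), eval x ((Pi.single i 1 : Fin 4 → MvPolynomial (Fin 4) k) m)
        = (Pi.single i (1 : k) : Fin 4 → k) m := by
      intro m i
      simp only [Pi.single_apply]; split_ifs <;> simp
    simp [e, e', Pi.single_apply]
    ring

lemma exists_split (n : ℕ) (d : Fin 4 →₀ ℕ) (h : Finsupp.degree d = n + 1) :
    ∃ i d', Finsupp.degree d' = n ∧ d = Finsupp.single i 1 + d' := by
  have hd : d ≠ 0 := by rintro rfl; simp at h
  obtain ⟨i, hi⟩ := Finsupp.ne_iff.1 hd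
  have hle : Finsupp.single i 1 ≤ d := by
    rw [Finsupp.single_le_iff]; exact Nat.one_le_iff_ne_zero.2 hi
  refine ⟨i, d - Finsupp.single i 1, ?_, (add_tsub_cancel_of_le hle).symm⟩
  have h2 : d = Finsupp.single i 1 + (d - Finsupp.single i 1) := (add_tsub_cancel_of_le hle).symm
  have h3 := congrArg Finsupp.degree h2
  rw [map_add, h, Finsupp.degree_single] at h3
  omega

lemma exists_rep (F : MvPolynomial (Fin 4) k) (hF : F.IsHomogeneous 3) : ∃ C, Rep F C := by
  have hs : ∀ (S : Finset (Fin 4 →₀ ℕ)), (∀ d ∈ S, Finsupp.degree d = 3) →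
      ∃ C, Rep (∑ d ∈ S, monomial d (coeff d F)) C := by
    classical
    intro S
    induction S using Finset.induction_on with
    | empty => exact fun _ => ⟨0, by simpa using rep_zero⟩
    | insert d S hd ih =>
      intro h
      obtain ⟨C, hC⟩ := ih (fun d hd => h d (Finset.mem_insert_of_mem hd))
      rw [Finset.sum_insert hd]
      obtain ⟨i, d1, h1, rfl⟩ := exists_split 2 d (h d (Finset.mem_insert_self _ _))
      obtain ⟨j, d2, h2, rfl⟩ := exists_split 1 d1 h1
      obtain ⟨l, d3, h3, rfl⟩ := exists_split 0 d2 h2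
      have h3 : d3 = 0 := (Finsupp.degree_eq_zero_iff d3).1 h3
      subst h3
      have := rep_mon (coeff (Finsupp.single i 1 + (Finsupp.single j 1 + (Finsupp.single l 1 + 0))) F) i j l
      have e : ∀ a : k, monomial (Finsupp.single i 1 + (Finsupp.single j 1 + (Finsupp.single l 1 + 0))) a
          = MvPolynomial.C a * (X i * (X j * X l)) := by
        intro a
        simp only [X, C_mul_monomial, monomial_mul, add_zero, mul_one]
      rw [← e] at this
      exact ⟨_, rep_add this hC⟩
  obtain ⟨C, hC⟩ := hs F.support (fun d hd => by
    by_contra h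
    exact (mem_support_iff.1 hd) (hF.coeff_eq_zero h))
  exact ⟨C, by rwa [← F.as_sum] at hC⟩

end Exist

section Main
variable {k : Type*} [Field k] [IsAlgClosed k]

lemma D_self {V : Type*} [AddCommGroup V] [Module k V] (C : V →ₗ[k] V →ₗ[k] V →ₗ[k] k) (x : V) :
    D C x x = 3 * f C x := by
  simp [f, D]; ring

lemma pair_out {W : Submodule k (Fin 4 → k)} {p u : Fin 4 → k} (hp : p ∈ W) (h0 : p ≠ 0)
    (hu : u ∉ W) : LinearIndependent k ![p, u] := by
  rw [LinearIndependent.pair_iff' h0]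
  intro a ha
  exact hu (ha ▸ W.smul_mem a hp)

variable {C : (Fin 4 → k) →ₗ[k] (Fin 4 → k) →ₗ[k] (Fin 4 → k) →ₗ[k] k}
  {W : Submodule k (Fin 4 → k)}

lemma not_all_zero (hsm : ∀ x, f C x = 0 → (∀ v, D C x v = 0) → x = 0)
    (hW : Module.finrank k W = 2) (hWF : ∀ x ∈ W, f C x = 0) {p q n : Fin 4 → k}
    (hp : p ∈ W) (hq : q ∈ W) (hpq : LinearIndependent k ![p, q]) (hn : n ∉ W)
    (h1 : D C p n = 0) (h2 : D C q n = 0) (h3 : T C p q n = 0) : False := by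
  have := IsAlgClosed.instInfinite (K := k)
  obtain ⟨v, hv⟩ := exists_frame hW hp hq hpq hn
  obtain ⟨x, y, hxy, h⟩ := exists_form_zero (D C p v) (T C p q v) (D C q v)
  have hw : x • p + y • q ∈ W := W.add_mem (W.smul_mem _ hp) (W.smul_mem _ hq)
  have h0 : x • p + y • q = 0 := by
    apply hsm _ (hWF _ hw)
    intro u
    obtain ⟨a, b, c, d, rfl⟩ := frame_gen hv u
    have e1 := D_zero_of_line C hWF hw hp
    have e2 := D_zero_of_line C hWF hw hq
    have e3 : D C (x • p + y • q) n = 0 := by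
      simp only [D_add_left, D_smul_left, T_smul_1, T_smul_2, h1, h2, h3]; ring
    have e4 : D C (x • p + y • q) v = 0 := by
      simp only [D_add_left, D_smul_left, T_smul_1, T_smul_2]; linear_combination h
    rw [D_add_right, D_add_right, D_add_right, D_smul_right, D_smul_right, D_smul_right,
      D_smul_right, e1, e2, e3, e4]
    ring
  have := LinearIndependent.pair_iff.1 hpq x y h0
  tauto

set_option maxHeartbeats 2000000 in
lemma disc_ne (hsm : ∀ x, f C x = 0 → (∀ v, D C x v = 0) → x = 0)
    (hW : Module.finrank k W = 2) (hWF : ∀ x ∈ W, f C x = 0) {p q n : Fin 4 → k}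
    (hp : p ∈ W) (hq : q ∈ W) (hpq : LinearIndependent k ![p, q]) (hn : n ∉ W)
    (h1 : D C p n = 0) (h2 : T C p q n = 0) (h3 : D C n p = 0) (r : k)
    (hr : D C q n * r ^ 2 + D C n q * r + f C n = 0) : D C n q + 2 * r * D C q n ≠ 0 := by
  intro h4
  have := IsAlgClosed.instInfinite (K := k)
  have hp0 : p ≠ 0 := hpq.ne_zero 0
  have hu : n + r • q ∉ W := fun h => hn ((W.add_mem_iff_left (W.smul_mem r hq)).1 h)
  obtain ⟨v, hv⟩ := exists_frame hW hp hq hpq hu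
  have fp := hWF p hp
  have fq := hWF q hq
  have Dpq := D_zero_of_line C hWF hp hq
  have Dqp := D_zero_of_line C hWF hq hp
  have Dpp := D_zero_of_line C hWF hp hp
  have Dqq := D_zero_of_line C hWF hq hq
  have Tpqq := T_zero_of_line C hWF hp hq hq
  have fu : f C (n + r • q) = 0 := by
    simp only [f_add, f_smul, D_smul_left, D_smul_right, fq]; linear_combination hr
  have Dpu : D C p (n + r • q) = 0 := by
    simp only [D_add_right, D_smul_right, h1, Dpq]; ring
  have Dup : D C (n + r • q) p = 0 := by
    have : T C n q p = 0 := by rw [T_comm23, T_comm12, T_comm23, h2]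
    simp only [D_add_left, D_smul_left, T_smul_2, h3, Dqp, this]; ring
  have Duq : D C (n + r • q) q = 0 := by
    have : T C n q q = 2 * D C q n := by rw [T_comm12, T_comm23, T_self]
    simp only [D_add_left, D_smul_left, T_smul_2, Dqq, this]; linear_combination h4
  have Tpuq : T C p (n + r • q) q = 0 := by
    simp only [T_add_2, T_smul_2, Tpqq, T_comm23 C p n q, h2]; ring
  have Tpup : T C p (n + r • q) p = 0 := by
    rw [T_comm23, T_self, Dpu, mul_zero]
  have Tpuu : T C p (n + r • q) (n + r • q) = 0 := by
    rw [T_comm12, T_comm23, T_self, Dup, mul_zero]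
  have Duu : D C (n + r • q) (n + r • q) = 0 := by rw [D_self, fu, mul_zero]
  generalize n + r • q = u at *
  obtain ⟨x, y, hxy, h⟩ := exists_form_zero (D C p v) (T C p u v) (D C u v)
  have h0 : x • p + y • u = 0 := by
    apply hsm
    · simp only [f_add, f_smul, D_smul_left, D_smul_right, fp, fu, Dpu, Dup]; ring
    intro z
    obtain ⟨a, b, c, d, rfl⟩ := frame_gen hv z
    simp only [D_add_left, D_smul_left, T_smul_1, T_smul_2, D_add_right, D_smul_right, T_add_3,
      T_smul_3, Dpu, Dup, Duq, Tpuq, Tpup, Tpuu, Duu, Dpp, Dpq]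
    linear_combination d * h
  have := LinearIndependent.pair_iff.1 (pair_out hp hp0 hu) x y h0
  tauto

lemma line_through (hsm : ∀ x, f C x = 0 → (∀ v, D C x v = 0) → x = 0)
    (hW : Module.finrank k W = 2) (hWF : ∀ x ∈ W, f C x = 0) {p q n : Fin 4 → k}
    (hp : p ∈ W) (hq : q ∈ W) (hpq : LinearIndependent k ![p, q]) (hn : n ∉ W)
    (h1 : D C p n = 0) {U : Submodule k (Fin 4 → k)} (hU : Module.finrank k U = 2)
    (hUF : ∀ x ∈ U, f C x = 0) (hUW : U ≠ W) (hpU : p ∈ U) :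
    ∃ r : k, n + r • q ∈ U ∧ D C n p + r * T C p q n = 0 := by
  have := IsAlgClosed.instInfinite (K := k)
  have hp0 : p ≠ 0 := hpq.ne_zero 0
  obtain ⟨v, hv⟩ := exists_frame hW hp hq hpq hn
  have hDv : D C p v ≠ 0 := by
    intro h
    apply hp0
    apply hsm p (hWF p hp)
    intro z
    obtain ⟨a, b, c, d, rfl⟩ := frame_gen hv z
    simp only [D_add_right, D_smul_right, D_zero_of_line C hWF hp hp, D_zero_of_line C hWF hp hq,
      h1, h]
    ring
  have hnot : ¬ U ≤ W := fun hle => hUW (Submodule.eq_of_le_of_finrank_le hle (by rw [hU, hW]))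
  obtain ⟨u, huU, huW⟩ := Set.not_subset.1 hnot
  have hDu := D_zero_of_line C hUF hpU huU
  obtain ⟨a, b, c, d, rfl⟩ := frame_gen hv u
  simp only [D_add_right, D_smul_right, D_zero_of_line C hWF hp hp, D_zero_of_line C hWF hp hq,
      h1] at hDu
  have hd : d = 0 := by
    have : d * D C p v = 0 := by linear_combination hDu
    exact (mul_eq_zero.1 this).resolve_right hDv
  subst hd
  have hc : c ≠ 0 := by
    rintro rfl
    apply huW
    simpa using W.add_mem (W.smul_mem a hp) (W.smul_mem b hq)
  have hmem : n + (c⁻¹ * b) • q ∈ U := by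
    have := U.smul_mem c⁻¹ (U.sub_mem huU (U.smul_mem a hpU))
    convert this using 1
    have : a • p + b • q + c • n + (0 : k) • v - a • p = b • q + c • n := by
      rw [zero_smul]; abel
    rw [this, smul_add, smul_smul, smul_smul, inv_mul_cancel₀ hc, one_smul, add_comm]
  refine ⟨c⁻¹ * b, hmem, ?_⟩
  have h := D_zero_of_line C hUF hmem hpU
  have e : T C n q p = T C p q n := by rw [T_comm23, T_comm12, T_comm23]
  simp only [D_add_left, D_smul_left, T_smul_2, D_zero_of_line C hWF hq hp, e] at h
  linear_combination h

lemma two_lines (hsm : ∀ x, f C x = 0 → (∀ v, D C x v = 0) → x = 0)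
    (hW : Module.finrank k W = 2) (hWF : ∀ x ∈ W, f C x = 0) {p q n : Fin 4 → k}
    (hp : p ∈ W) (hq : q ∈ W) (hpq : LinearIndependent k ![p, q]) (hn : n ∉ W)
    (h1 : D C p n = 0) {U U' : Submodule k (Fin 4 → k)} (hU : Module.finrank k U = 2)
    (hUF : ∀ x ∈ U, f C x = 0) (hUW : U ≠ W) (hpU : p ∈ U) (hU' : Module.finrank k U' = 2)
    (hUF' : ∀ x ∈ U', f C x = 0) (hUW' : U' ≠ W) (hpU' : p ∈ U') (hne : U ≠ U') :
    T C p q n = 0 ∧ D C n p = 0 := by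
  obtain ⟨r, hr, e⟩ := line_through hsm hW hWF hp hq hpq hn h1 hU hUF hUW hpU
  obtain ⟨r', hr', e'⟩ := line_through hsm hW hWF hp hq hpq hn h1 hU' hUF' hUW' hpU'
  have hp0 : p ≠ 0 := hpq.ne_zero 0
  have hrr : r ≠ r' := by
    rintro rfl
    have hu : n + r • q ∉ W := fun h => hn ((W.add_mem_iff_left (W.smul_mem r hq)).1 h)
    have hl := pair_out hp hp0 hu
    exact hne ((pair_gen hU hpU hr hl).symm.trans (pair_gen hU' hpU' hr' hl))
  have hT : T C p q n = 0 := by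
    have : (r - r') * T C p q n = 0 := by linear_combination e - e'
    exact (mul_eq_zero.1 this).resolve_left (sub_ne_zero.2 hrr)
  exact ⟨hT, by rw [hT] at e; simpa using e⟩

lemma eck_iff {F : MvPolynomial (Fin 4) k} (hF : ∀ x, eval x F = f C x)
    (hsm : ∀ x, f C x = 0 → (∀ v, D C x v = 0) → x = 0)
    (hW : Module.finrank k W = 2) (hWF : ∀ x ∈ W, f C x = 0) {p q n : Fin 4 → k}
    (hp : p ∈ W) (hq : q ∈ W) (hpq : LinearIndependent k ![p, q]) (hn : n ∉ W)
    (h1 : D C p n = 0) :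
    IsEckardtPoint F (Submodule.span k {p}) ↔ T C p q n = 0 ∧ D C n p = 0 := by
  have := IsAlgClosed.instInfinite (K := k)
  have hp0 : p ≠ 0 := hpq.ne_zero 0
  have hle : ∀ U : Submodule k (Fin 4 → k), Submodule.span k {p} ≤ U ↔ p ∈ U := by
    intro U; simp
  constructor
  · rintro ⟨-, U₁, U₂, U₃, h12, h13, h23, ⟨d1, z1⟩, ⟨d2, z2⟩, ⟨d3, z3⟩, l1, l2, l3⟩
    rw [hle] at l1 l2 l3
    replace z1 : ∀ x ∈ U₁, f C x = 0 := fun x hx => (hF x).symm.trans (z1 x hx)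
    replace z2 : ∀ x ∈ U₂, f C x = 0 := fun x hx => (hF x).symm.trans (z2 x hx)
    replace z3 : ∀ x ∈ U₃, f C x = 0 := fun x hx => (hF x).symm.trans (z3 x hx)
    by_cases c1 : U₁ = W
    · exact two_lines hsm hW hWF hp hq hpq hn h1 d2 z2 (fun h => h12 (c1.trans h.symm)) l2
        d3 z3 (fun h => h13 (c1.trans h.symm)) l3 h23
    by_cases c2 : U₂ = W
    · exact two_lines hsm hW hWF hp hq hpq hn h1 d1 z1 c1 l1
        d3 z3 (fun h => h23 (c2.trans h.symm)) l3 h13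
    · exact two_lines hsm hW hWF hp hq hpq hn h1 d1 z1 c1 l1 d2 z2 c2 l2 h12
  · rintro ⟨h2, h3⟩
    have ha : D C q n ≠ 0 := fun h => not_all_zero hsm hW hWF hp hq hpq hn h1 h h2
    obtain ⟨r, hr⟩ := exists_quad_root ha (D C n q) (f C n)
    have hd := disc_ne hsm hW hWF hp hq hpq hn h1 h2 h3 r hr
    obtain ⟨r', hr', hrr⟩ : ∃ r', D C q n * r' ^ 2 + D C n q * r' + f C n = 0 ∧ r ≠ r' := by
      refine ⟨- D C n q / D C q n - r, ?_, ?_⟩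
      · field_simp
        linear_combination D C q n * hr
      · intro h
        apply hd
        field_simp at h
        linear_combination h
    have line : ∀ r : k, D C q n * r ^ 2 + D C n q * r + f C n = 0 →
        IsLineIn F (Submodule.span k (Set.range ![p, n + r • q])) := by
      intro r hr
      have hu : n + r • q ∉ W := fun h => hn ((W.add_mem_iff_left (W.smul_mem r hq)).1 h)
      refine ⟨by rw [finrank_span_eq_card (pair_out hp hp0 hu)]; simp, ?_⟩
      intro x hx
      obtain ⟨a, b, rfl⟩ := mem_span_pair'.1 hx
      have fq := hWF q hq
      have e : T C n q p = 0 := by rw [T_comm23, T_comm12, T_comm23, h2]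
      rw [hF]
      simp only [f_add, f_smul, D_smul_left, D_smul_right, D_add_left, D_add_right, T_smul_2, e,
        hWF p hp, h1, h3, fq, D_zero_of_line C hWF hp hq, D_zero_of_line C hWF hq hp]
      linear_combination b ^ 3 * hr
    have m1 : ∀ r : k, p ∈ Submodule.span k (Set.range ![p, n + r • q]) := fun r =>
      mem_span_pair'.2 ⟨1, 0, by simp⟩
    have m2 : ∀ r : k, n + r • q ∈ Submodule.span k (Set.range ![p, n + r • q]) := fun r =>
      mem_span_pair'.2 ⟨0, 1, by simp⟩
    have neW : ∀ r : k, W ≠ Submodule.span k (Set.range ![p, n + r • q]) := by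
      intro r h
      have := m2 r
      rw [← h] at this
      exact hn ((W.add_mem_iff_left (W.smul_mem r hq)).1 this)
    refine ⟨finrank_span_singleton hp0, W, _, _, neW r, neW r', ?_,
      ⟨hW, fun x hx => (hF x).trans (hWF x hx)⟩, line r hr, line r' hr',
      (hle _).2 hp, (hle _).2 (m1 r), (hle _).2 (m1 r')⟩
    intro heq
    have a1 := m2 r
    have a2 := m2 r'
    rw [← heq] at a2
    have a3 := Submodule.sub_mem _ a1 a2
    have a4 : q ∈ Submodule.span k (Set.range ![p, n + r • q]) := by
      have := Submodule.smul_mem _ (r - r')⁻¹ a3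
      convert this using 1
      rw [add_sub_add_left_eq_sub, ← sub_smul, smul_smul, inv_mul_cancel₀ (sub_ne_zero.2 hrr),
        one_smul]
    apply neW r
    rw [← pair_gen hW hp hq hpq, pair_gen (line r hr).1 (m1 r) a4 hpq]

lemma exists_frame2 {p q : Fin 4 → k} (hpq : LinearIndependent k ![p, q]) :
    ∃ v n, LinearIndependent k ![v, n, p, q] := by
  obtain ⟨n, hn⟩ := exists_linearIndependent_cons_of_lt_finrank hpq (by simp)
  obtain ⟨v, hv⟩ := exists_linearIndependent_cons_of_lt_finrank hn (by simp)
  exact ⟨v, n, hv⟩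

/-- The normal vector to `W` in the tangent plane at `w`. -/
def nn (C : (Fin 4 → k) →ₗ[k] (Fin 4 → k) →ₗ[k] (Fin 4 → k) →ₗ[k] k) (n v w : Fin 4 → k) :
    Fin 4 → k := D C w v • n + (-D C w n) • v

lemma D_nn (n v w x : Fin 4 → k) :
    D C x (nn C n v w) = D C w v * D C x n - D C w n * D C x v := by
  simp only [nn, D_add_right, D_smul_right]; ring

lemma T_nn (n v w x y : Fin 4 → k) :
    T C x y (nn C n v w) = D C w v * T C x y n - D C w n * T C x y v := by
  simp only [nn, T_add_3, T_smul_3]; ring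

lemma nn_notMem (hsm : ∀ x, f C x = 0 → (∀ v, D C x v = 0) → x = 0)
    (hW : Module.finrank k W = 2) (hWF : ∀ x ∈ W, f C x = 0) {p q n v : Fin 4 → k}
    (hp : p ∈ W) (hq : q ∈ W) (h : LinearIndependent k ![v, n, p, q]) {w : Fin 4 → k} (hw : w ∈ W)
    (hw0 : w ≠ 0) : nn C n v w ∉ W := by
  have := IsAlgClosed.instInfinite (K := k)
  apply frame_notMem hW hp hq h
  by_contra! hc
  obtain ⟨h1, h2⟩ := hc
  apply hw0
  apply hsm w (hWF w hw)
  intro z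
  obtain ⟨a, b, c, d, rfl⟩ := frame_gen h z
  simp only [D_add_right, D_smul_right, D_zero_of_line C hWF hw hp, D_zero_of_line C hWF hw hq,
    h1, neg_eq_zero.1 h2]
  ring

lemma exists_gen1 {L : Submodule k (Fin 4 → k)} (hL : Module.finrank k L = 1) :
    ∃ p, p ≠ 0 ∧ L = Submodule.span k {p} := by
  have : L ≠ ⊥ := by rintro rfl; simp at hL
  obtain ⟨p, hp, h0⟩ := (Submodule.ne_bot_iff L).1 this
  refine ⟨p, h0, (Submodule.eq_of_le_of_finrank_le ?_ ?_).symm⟩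
  · simpa using hp
  · rw [hL, finrank_span_singleton h0]

lemma pair_of_span_ne {p q : Fin 4 → k} (hp : p ≠ 0) (hq : q ≠ 0)
    (h : Submodule.span k {p} ≠ Submodule.span k {q}) : LinearIndependent k ![p, q] := by
  rw [LinearIndependent.pair_iff' hp]
  rintro a rfl
  apply h
  have ha : a ≠ 0 := by rintro rfl; simp at hq
  exact (Submodule.span_singleton_smul_eq (IsUnit.mk0 a ha) p).symm

/-- The criterion expressed through `nn`. -/
lemma eck_iff_nn {F : MvPolynomial (Fin 4) k} (hF : ∀ x, eval x F = f C x)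
    (hsm : ∀ x, f C x = 0 → (∀ v, D C x v = 0) → x = 0)
    (hW : Module.finrank k W = 2) (hWF : ∀ x ∈ W, f C x = 0) {p q p' q' n v : Fin 4 → k}
    (hp : p ∈ W) (hq : q ∈ W) (hpq : LinearIndependent k ![p, q])
    (hp' : p' ∈ W) (hq' : q' ∈ W) (hf : LinearIndependent k ![v, n, p', q']) :
    IsEckardtPoint F (Submodule.span k {p}) ↔
      T C p q (nn C n v p) = 0 ∧ D C (nn C n v p) p = 0 := by
  apply eck_iff hF hsm hW hWF hp hq hpq
    (nn_notMem hsm hW hWF hp' hq' hf hp (hpq.ne_zero 0))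
  rw [D_nn]; ring

lemma pair_swap {p q : Fin 4 → k} (h : LinearIndependent k ![p, q]) :
    LinearIndependent k ![q, p] := by
  rw [LinearIndependent.pair_iff] at h ⊢
  intro s t hst
  rw [add_comm] at hst
  exact (h t s hst).symm

lemma two_points {F : MvPolynomial (Fin 4) k} (hF : ∀ x, eval x F = f C x)
    (hsm : ∀ x, f C x = 0 → (∀ v, D C x v = 0) → x = 0)
    (hW : Module.finrank k W = 2) (hWF : ∀ x ∈ W, f C x = 0) {p q n v : Fin 4 → k}
    (hp : p ∈ W) (hq : q ∈ W) (hf : LinearIndependent k ![v, n, p, q])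
    (h1 : IsEckardtPoint F (Submodule.span k {p}))
    (h2 : IsEckardtPoint F (Submodule.span k {q})) :
    T C p q n = 0 ∧ T C p q v = 0 ∧ D C p v * D C q n - D C p n * D C q v ≠ 0 := by
  have hpq : LinearIndependent k ![p, q] :=
    (linearIndependent_finCons.1 (linearIndependent_finCons.1 hf).1).1
  have e1 := ((eck_iff_nn hF hsm hW hWF hp hq hpq hp hq hf).1 h1).1
  have e2 := ((eck_iff_nn hF hsm hW hWF hq hp (pair_swap hpq) hp hq hf).1 h2).1
  have hne : D C p v * D C q n - D C p n * D C q v ≠ 0 := by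
    intro h
    refine not_all_zero hsm hW hWF hp hq hpq
      (nn_notMem hsm hW hWF hp hq hf hp (hpq.ne_zero 0)) ?_ ?_ e1
    · rw [D_nn]; ring
    · rw [D_nn, h]
  rw [T_nn] at e1 e2
  rw [T_comm12 C q p, T_comm12 C q p] at e2
  refine ⟨?_, ?_, hne⟩
  · refine (mul_eq_zero.1 (?_ : (D C p v * D C q n - D C p n * D C q v) * T C p q n = 0)).resolve_left hne
    linear_combination D C q n * e1 - D C p n * e2
  · refine (mul_eq_zero.1 (?_ : (D C p v * D C q n - D C p n * D C q v) * T C p q v = 0)).resolve_left hne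
    linear_combination D C q v * e1 - D C p v * e2

lemma no_three {F : MvPolynomial (Fin 4) k} (hF : ∀ x, eval x F = f C x)
    (hsm : ∀ x, f C x = 0 → (∀ v, D C x v = 0) → x = 0)
    (hW : Module.finrank k W = 2) (hWF : ∀ x ∈ W, f C x = 0) (h2 : (2 : k) ≠ 0)
    {L₁ L₂ L₃ : Submodule k (Fin 4 → k)} (h₁ : IsEckardtPoint F L₁ ∧ L₁ ≤ W)
    (h₂ : IsEckardtPoint F L₂ ∧ L₂ ≤ W) (h₃ : IsEckardtPoint F L₃ ∧ L₃ ≤ W)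
    (h12 : L₁ ≠ L₂) (h13 : L₁ ≠ L₃) (h23 : L₂ ≠ L₃) : False := by
  obtain ⟨p, p0, rfl⟩ := exists_gen1 h₁.1.1
  obtain ⟨q, q0, rfl⟩ := exists_gen1 h₂.1.1
  obtain ⟨w, w0, rfl⟩ := exists_gen1 h₃.1.1
  have hp : p ∈ W := by simpa using h₁.2
  have hq : q ∈ W := by simpa using h₂.2
  have hw : w ∈ W := by simpa using h₃.2
  have hpq := pair_of_span_ne p0 q0 h12
  have hwp := pair_swap (pair_of_span_ne p0 w0 h13)
  have hwq := pair_of_span_ne q0 w0 h23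
  obtain ⟨v, n, hf⟩ := exists_frame2 hpq
  obtain ⟨e1, e2, e3⟩ := two_points hF hsm hW hWF hp hq hf h₁.1 h₂.1
  have e := ((eck_iff_nn hF hsm hW hWF hw hp hwp hp hq hf).1 h₃.1).1
  obtain ⟨s, t, rfl⟩ := pair_gen' hW hp hq hpq hw
  have hs : s ≠ 0 := by
    rintro rfl
    rw [LinearIndependent.pair_iff' q0] at hwq
    exact hwq t (by simp)
  have ht : t ≠ 0 := by
    rintro rfl
    have := (LinearIndependent.pair_iff.1 hwp) 1 (-s) (by simp)
    exact one_ne_zero this.1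
  rw [T_nn] at e
  simp only [D_add_left, D_smul_left, T_add_1, T_smul_1, T_smul_2, T_self, T_comm12 C q p, e1, e2]
    at e
  have : 2 * s * t ^ 2 * (D C p v * D C q n - D C p n * D C q v) = 0 := by
    linear_combination -e
  simp [h2, hs, ht, e3] at this

/-- The quintic polynomial. -/
lemma exists_quintic (h2 : (2 : k) = 0) {p q n v : Fin 4 → k}
    (e1 : T C p q n = 0) (e2 : T C p q v = 0) :
    ∃ P : Polynomial k, P.natDegree ≤ 5 ∧ P.coeff 5 = D C (nn C n v p) p ∧
      (∀ x, P.eval x = D C (nn C n v (x • p + q)) (x • p + q)) ∧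
      (∀ x, P.derivative.eval x = D C (nn C n v (x • p + q)) p) := by
  let Q3 : Polynomial k := Polynomial.C (D C p v) * Polynomial.X ^ 2 + Polynomial.C (D C q v)
  let Q2 : Polynomial k := Polynomial.C (D C p n) * Polynomial.X ^ 2 + Polynomial.C (D C q n)
  have hd : ∀ a b : k, (Polynomial.C a * Polynomial.X ^ 2 + Polynomial.C b).derivative = 0 := by
    intro a b
    have h2' : (1 : k) + 1 = 0 := by rw [one_add_one_eq_two, h2]
    simp [h2']
  refine ⟨Q3 ^ 2 * (Polynomial.C (D C n p) * Polynomial.X + Polynomial.C (D C n q)) - Q2 * Q3 * (Polynomial.C (T C n v p) * Polynomial.X + Polynomial.C (T C n v q))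
    + Q2 ^ 2 * (Polynomial.C (D C v p) * Polynomial.X + Polynomial.C (D C v q)), ?_, ?_, ?_, ?_⟩
  · simp only [Q3, Q2]; compute_degree
  · have expand : ∀ a b c d e g : k,
      (Polynomial.C a * Polynomial.X ^ 2 + Polynomial.C b) * (Polynomial.C c * Polynomial.X ^ 2 + Polynomial.C d)
        * (Polynomial.C e * Polynomial.X + Polynomial.C g) =
      Polynomial.C (a * c * e) * Polynomial.X ^ 5 + Polynomial.C (a * c * g) * Polynomial.X ^ 4
       + Polynomial.C ((a * d + b * c) * e) * Polynomial.X ^ 3 + Polynomial.C ((a * d + b * c) * g) * Polynomial.X ^ 2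
       + Polynomial.C (b * d * e) * Polynomial.X ^ 1 + Polynomial.C (b * d * g) * Polynomial.X ^ 0 := by
      intro a b c d e g
      simp only [map_mul, map_add]; ring
    simp only [Q3, Q2, sq (_ + _ : Polynomial k), expand, Polynomial.coeff_add, Polynomial.coeff_sub, Polynomial.coeff_C_mul, Polynomial.coeff_X_pow]
    simp only [nn, D_add_left, D_smul_left, T_smul_1, T_smul_2]
    norm_num
    ring
  · intro x
    simp only [Q3, Q2, nn, D_add_left, D_smul_left, T_smul_1, T_smul_2, D_add_right, D_smul_right,
      T_add_3, T_smul_3, e1, e2]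
    simp
    ring
  · intro x
    have d3 : Q3.derivative = 0 := hd _ _
    have d2 : Q2.derivative = 0 := hd _ _
    simp only [Polynomial.derivative_add, Polynomial.derivative_sub, Polynomial.derivative_mul,
      Polynomial.derivative_pow, d2, d3]
    simp only [Q3, Q2, nn, D_add_left, D_smul_left, T_smul_1, T_smul_2, D_add_right, D_smul_right,
      T_add_3, T_smul_3, e1, e2]
    simp
    ring

lemma pair_shift {p q : Fin 4 → k} (h : LinearIndependent k ![p, q]) (x : k) :
    LinearIndependent k ![x • p + q, p] := by
  rw [LinearIndependent.pair_iff] at h ⊢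
  intro s t hst
  have := h (s * x + t) s (by rw [← hst]; module)
  obtain ⟨h1, rfl⟩ := this
  exact ⟨rfl, by simpa using h1⟩

lemma deriv_ne (hsm : ∀ x, f C x = 0 → (∀ v, D C x v = 0) → x = 0)
    (hW : Module.finrank k W = 2) (hWF : ∀ x ∈ W, f C x = 0) (h2 : (2 : k) = 0)
    {p q n v w u : Fin 4 → k}
    (hp : p ∈ W) (hq : q ∈ W) (hf : LinearIndependent k ![v, n, p, q])
    (hT : ∀ x ∈ W, ∀ y ∈ W, ∀ z, T C x y z = 0)
    (hw : w ∈ W) (hu : u ∈ W) (hwu : LinearIndependent k ![w, u])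
    (h : D C (nn C n v w) w = 0) : D C (nn C n v w) u ≠ 0 := by
  have hnn := nn_notMem hsm hW hWF hp hq hf hw (hwu.ne_zero 0)
  have h1 : D C w (nn C n v w) = 0 := by rw [D_nn]; ring
  have ha : D C u (nn C n v w) ≠ 0 := fun h' =>
    not_all_zero hsm hW hWF hw hu hwu hnn h1 h' (hT w hw u hu _)
  obtain ⟨r, hr⟩ := exists_quad_root ha (D C (nn C n v w) u) (f C (nn C n v w))
  have := disc_ne hsm hW hWF hw hu hwu hnn h1 (hT w hw u hu _) h r hr
  simpa [h2] using this

lemma five {F : MvPolynomial (Fin 4) k} (hF : ∀ x, eval x F = f C x)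
    (hsm : ∀ x, f C x = 0 → (∀ v, D C x v = 0) → x = 0)
    (hW : Module.finrank k W = 2) (hWF : ∀ x ∈ W, f C x = 0) (h2 : (2 : k) = 0)
    {L₁ L₂ : Submodule k (Fin 4 → k)} (h₁ : IsEckardtPoint F L₁ ∧ L₁ ≤ W)
    (h₂ : IsEckardtPoint F L₂ ∧ L₂ ≤ W) (h12 : L₁ ≠ L₂) :
    {L : Submodule k (Fin 4 → k) | IsEckardtPoint F L ∧ L ≤ W}.Finite ∧
    {L : Submodule k (Fin 4 → k) | IsEckardtPoint F L ∧ L ≤ W}.ncard = 5 := by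
  classical
  have := IsAlgClosed.instInfinite (K := k)
  obtain ⟨p, p0, rfl⟩ := exists_gen1 h₁.1.1
  obtain ⟨q, q0, rfl⟩ := exists_gen1 h₂.1.1
  have hp : p ∈ W := by simpa using h₁.2
  have hq : q ∈ W := by simpa using h₂.2
  have hpq := pair_of_span_ne p0 q0 h12
  obtain ⟨v, n, hf⟩ := exists_frame2 hpq
  obtain ⟨e1, e2, -⟩ := two_points hF hsm hW hWF hp hq hf h₁.1 h₂.1
  have hT : ∀ x ∈ W, ∀ y ∈ W, ∀ z, T C x y z = 0 := by
    intro x hx y hy z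
    obtain ⟨a, b, rfl⟩ := pair_gen' hW hp hq hpq hx
    obtain ⟨a', b', rfl⟩ := pair_gen' hW hp hq hpq hy
    obtain ⟨c1, c2, c3, c4, rfl⟩ := frame_gen hf z
    simp only [T_add_1, T_smul_1, T_add_2, T_smul_2, T_self, T_comm12 C q p, h2, T_add_3, T_smul_3,
      e1, e2, T_zero_of_line C hWF hp hq hp, T_zero_of_line C hWF hp hq hq]
    ring
  have crit : ∀ w ∈ W, w ≠ 0 →
      (IsEckardtPoint F (Submodule.span k {w}) ↔ D C (nn C n v w) w = 0) := by
    intro w hw hw0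
    obtain ⟨u, hu, hwu⟩ := exists_second hW hw hw0
    rw [eck_iff_nn hF hsm hW hWF hw hu hwu hp hq hf]
    simp [hT w hw u hu]
  -- a point of `W` that is not an Eckardt point
  obtain ⟨a, b, ha, hb, hab, hna⟩ : ∃ a b, a ∈ W ∧ b ∈ W ∧ LinearIndependent k ![a, b] ∧
      D C (nn C n v a) a ≠ 0 := by
    obtain ⟨P, -, -, hP, hP'⟩ := exists_quintic (C := C) h2 e1 e2
    by_contra! hc
    have hz : ∀ x : k, D C (nn C n v (x • p + q)) (x • p + q) = 0 := fun x =>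
      hc _ p (W.add_mem (W.smul_mem x hp) hq) hp (pair_shift hpq x)
    have hP0 : P = 0 := by
      apply Polynomial.funext
      intro x
      rw [hP, hz]; simp
    have := hP' 0
    rw [hP0] at this
    refine deriv_ne hsm hW hWF h2 hp hq hf hT (W.add_mem (W.smul_mem 0 hp) hq) hp
      (pair_shift hpq 0) (hz 0) ?_
    rw [← this]; simp
  obtain ⟨P, hdeg, hc5, hP, hP'⟩ := exists_quintic (C := C) h2 (hT a ha b hb n) (hT a ha b hb v)
  have hdeg5 : P.natDegree = 5 := by
    apply le_antisymm hdeg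
    apply Polynomial.le_natDegree_of_ne_zero
    rw [hc5]; exact hna
  have hP0 : P ≠ 0 := by rintro rfl; simp at hdeg5
  have hmem : ∀ x : k, x • a + b ∈ W := fun x => W.add_mem (W.smul_mem x ha) hb
  have hnod : P.roots.Nodup := by
    rw [Multiset.nodup_iff_count_le_one]
    intro x
    rw [Polynomial.count_roots]
    by_contra! hlt
    rw [Polynomial.one_lt_rootMultiplicity_iff_isRoot hP0] at hlt
    obtain ⟨r1, r2⟩ := hlt
    rw [Polynomial.IsRoot, hP] at r1
    rw [Polynomial.IsRoot, hP'] at r2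
    exact deriv_ne hsm hW hWF h2 hp hq hf hT (hmem x) ha (pair_shift hab x) r1 r2
  have hcard : P.roots.toFinset.card = 5 := by
    rw [Multiset.toFinset_card_of_nodup hnod, IsAlgClosed.card_roots_eq_natDegree, hdeg5]
  have himg : {L : Submodule k (Fin 4 → k) | IsEckardtPoint F L ∧ L ≤ W} =
      (fun x : k => Submodule.span k {x • a + b}) '' (P.roots.toFinset : Set k) := by
    ext L
    simp only [Set.mem_setOf_eq, Set.mem_image, Finset.mem_coe, Multiset.mem_toFinset,
      Polynomial.mem_roots hP0, Polynomial.IsRoot, hP]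
    constructor
    · rintro ⟨hE, hL⟩
      obtain ⟨w, w0, rfl⟩ := exists_gen1 hE.1
      have hw : w ∈ W := by simpa using hL
      have hc := (crit w hw w0).1 hE
      obtain ⟨s, t, rfl⟩ := pair_gen' hW ha hb hab hw
      have ht : t ≠ 0 := by
        rintro rfl
        have hs : s ≠ 0 := by rintro rfl; simp at w0
        rw [zero_smul, add_zero] at hE
        rw [Submodule.span_singleton_smul_eq (IsUnit.mk0 s hs),
          crit a ha (hab.ne_zero 0)] at hE
        exact hna hE
      have hsp : Submodule.span k {(t⁻¹ * s) • a + b} = Submodule.span k {s • a + t • b} := by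
        rw [← Submodule.span_singleton_smul_eq (IsUnit.mk0 t ht) ((t⁻¹ * s) • a + b), smul_add,
          smul_smul, mul_inv_cancel_left₀ ht]
      refine ⟨t⁻¹ * s, ?_, hsp⟩
      rw [← crit _ (hmem _) ((pair_shift hab _).ne_zero 0), hsp]
      exact hE
    · rintro ⟨x, hx, rfl⟩
      refine ⟨(crit _ (hmem x) ((pair_shift hab _).ne_zero 0)).2 hx, ?_⟩
      simpa using hmem x
  have hinj : Function.Injective (fun x : k => Submodule.span k {x • a + b}) := by
    intro x y hxy
    have hx : x • a + b ∈ Submodule.span k {y • a + b} := by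
      have h : Submodule.span k {x • a + b} = Submodule.span k {y • a + b} := hxy
      rw [← h]
      exact Submodule.mem_span_singleton_self _
    obtain ⟨c, hc⟩ := Submodule.mem_span_singleton.1 hx
    have := LinearIndependent.pair_iff.1 hab (c * y - x) (c - 1) (by
      rw [← sub_eq_zero] at hc
      rw [← hc]; module)
    obtain ⟨h1, h2⟩ := this
    have hc1 : c = 1 := sub_eq_zero.1 h2
    rw [hc1, one_mul, sub_eq_zero] at h1
    exact h1.symm
  rw [himg]
  refine ⟨Set.Finite.image _ (Finset.finite_toSet _), ?_⟩
  rw [Set.ncard_image_of_injective _ hinj, Set.ncard_coe_finset, hcard]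

end Main

end Eck

/-- Let `ℓ` be a projective line contained in a smooth cubic
surface `V(F)`.  If `char k ≠ 2` then `ℓ` contains at most two Eckardt points
of `V(F)`; if `char k = 2` then `ℓ` contains exactly `0`, `1`, or `5` Eckardt
points of `V(F)`. -/
theorem stmt2 {k : Type*} [Field k] [IsAlgClosed k]
    (F : MvPolynomial (Fin 4) k) (hF0 : F ≠ 0) (hhom : F.IsHomogeneous 3)
    (hsmooth : ∀ x : Fin 4 → k,
      eval x F = 0 → (∀ i, eval x (pderiv i F) = 0) → x = 0)
    (W : Submodule k (Fin 4 → k)) (hW : Module.finrank k W = 2)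
    (hWF : VanishesOn F W) :
    (ringChar k ≠ 2 →
      {L : Submodule k (Fin 4 → k) | IsEckardtPoint F L ∧ L ≤ W}.Finite ∧
      {L : Submodule k (Fin 4 → k) | IsEckardtPoint F L ∧ L ≤ W}.ncard ≤ 2) ∧
    (ringChar k = 2 →
      {L : Submodule k (Fin 4 → k) | IsEckardtPoint F L ∧ L ≤ W}.Finite ∧
      ({L : Submodule k (Fin 4 → k) | IsEckardtPoint F L ∧ L ≤ W}.ncard = 0 ∨
       {L : Submodule k (Fin 4 → k) | IsEckardtPoint F L ∧ L ≤ W}.ncard = 1 ∨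
       {L : Submodule k (Fin 4 → k) | IsEckardtPoint F L ∧ L ≤ W}.ncard = 5)) := by
  obtain ⟨C, hC, hD⟩ := Eck.exists_rep F hhom
  have hsm : ∀ x, Eck.f C x = 0 → (∀ v, Eck.D C x v = 0) → x = 0 := by
    intro x h1 h2
    refine hsmooth x ((hC x).trans h1) (fun i => ?_)
    have := hD x (Pi.single i 1)
    rw [h2] at this
    simpa [Pi.single_apply] using this
  have hWF' : ∀ x ∈ W, Eck.f C x = 0 := fun x hx => (hC x).symm.trans (hWF x hx)
  constructor
  · intro hchar
    have h2 : (2 : k) ≠ 0 := Ring.two_ne_zero hchar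
    have hno := fun a b c ha hb hc hab hac hbc =>
      Eck.no_three hC hsm hW hWF' h2 (L₁ := a) (L₂ := b) (L₃ := c) ha hb hc hab hac hbc
    have hfin : {L : Submodule k (Fin 4 → k) | IsEckardtPoint F L ∧ L ≤ W}.Finite := by
      by_contra hinf
      obtain ⟨t, hts, htf, ht3⟩ := Set.Infinite.exists_subset_ncard_eq hinf 3
      obtain ⟨a, b, c, ha, hb, hc, hab, hac, hbc⟩ :=
        (Set.two_lt_ncard_iff htf).1 (by rw [ht3]; norm_num)
      exact hno a b c (hts ha) (hts hb) (hts hc) hab hac hbc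
    refine ⟨hfin, ?_⟩
    by_contra! hlt
    obtain ⟨a, b, c, ha, hb, hc, hab, hac, hbc⟩ := (Set.two_lt_ncard_iff hfin).1 hlt
    exact hno a b c ha hb hc hab hac hbc
  · intro hchar
    have h2 : (2 : k) = 0 := by
      have := ringChar.Nat.cast_ringChar (R := k)
      rw [hchar] at this
      exact_mod_cast this
    by_cases hsub : {L : Submodule k (Fin 4 → k) | IsEckardtPoint F L ∧ L ≤ W}.Subsingleton
    · refine ⟨hsub.finite, ?_⟩
      rcases hsub.eq_empty_or_singleton with h | ⟨L, h⟩
      · left; rw [h]; simp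
      · right; left; rw [h]; simp
    · obtain ⟨a, ha, b, hb, hab⟩ := Set.not_subsingleton_iff.1 hsub
      obtain ⟨h5, h5'⟩ := Eck.five hC hsm hW hWF' h2 ha hb hab
      exact ⟨h5, Or.inr (Or.inr h5')⟩
end

section
/- Let F be a nonzero homogeneous polynomial of degree 3 in k[x₀,x₁,x₂,x₃] such that the cubic surface V(F) is smooth, and let ℓ be a projective line in ℙ³(k) that is NOT contained in V(F). If ℓ contains at least two Eckardt points of V(F), then ℓ contains exactly three Eckardt points of V(F). -/
open MvPolynomial Matrix

abbrev V4 (k : Type*) := Fin 4 → k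

/-- Trilinear forms on `k⁴`. -/
abbrev Tri (k : Type*) [Field k] := V4 k →ₗ[k] V4 k →ₗ[k] V4 k →ₗ[k] k

/-- The differential at `p` of the cubic form `x ↦ B x x x`. -/
def dForm {k : Type*} [Field k] (B : Tri k) (p : V4 k) : V4 k →ₗ[k] k where
  toFun v := B v p p + B p v p + B p p v
  map_add' x y := by simp only [map_add, LinearMap.add_apply]; ring
  map_smul' c x := by
    simp only [map_smul, LinearMap.smul_apply, smul_eq_mul, RingHom.id_apply]; ring

lemma dForm_apply {k : Type*} [Field k] (B : Tri k) (p v : V4 k) :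
    dForm B p v = B v p p + B p v p + B p p v := rfl

lemma exists_tri {k : Type*} [Field k] (F : MvPolynomial (Fin 4) k) (hhom : F.IsHomogeneous 3) :
    ∃ B : Tri k, (∀ x, eval x F = B x x x) ∧
      ∀ p i, eval p (pderiv i F) = dForm B p (Pi.single i 1) := by
  rw [F.as_sum]
  have key : ∀ s : Finset (Fin 4 →₀ ℕ), s ⊆ F.support → ∃ B : Tri k,
      (∀ x, eval x (∑ v ∈ s, monomial v (coeff v F)) = B x x x) ∧
      ∀ p i, eval p (pderiv i (∑ v ∈ s, monomial v (coeff v F))) =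
        dForm B p (Pi.single i 1) := by
    intro s
    induction s using Finset.induction_on with
    | empty => intro _; exact ⟨0, by simp, by simp [dForm_apply]⟩
    | insert d s hd ih =>
      intro hs
      obtain ⟨B, h1, h2⟩ := ih (fun x hx => hs (Finset.mem_insert_of_mem hx))
      have hd3 : d.degree = 3 := by
        have := hhom (mem_support_iff.1 (hs (Finset.mem_insert_self d s)))
        rw [Finsupp.degree_eq_weight_one]; exact this
      have : Multiset.card (Finsupp.toMultiset d) = 3 := by
        rw [Finsupp.card_toMultiset]; exact hd3
      obtain ⟨a, b, c, habc⟩ := Multiset.card_eq_three.1 this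
      have hm : monomial d (coeff d F) = C (coeff d F) * (X a * X b * X c) := by
        have : d = Finsupp.single a 1 + Finsupp.single b 1 + Finsupp.single c 1 := by
          apply Finsupp.orderIsoMultiset.injective
          simp only [Finsupp.coe_orderIsoMultiset]
          rw [habc]; simp [Finsupp.toMultiset_single]
        generalize coeff d F = e
        rw [this, monomial_add_single, monomial_add_single, ← C_mul_X_eq_monomial]
        ring
      refine ⟨(LinearMap.proj a).smulRight ((LinearMap.proj b).smulRight
        ((coeff d F) • (LinearMap.proj c : V4 k →ₗ[k] k))) + B, ?_, ?_⟩
      · intro x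
        rw [Finset.sum_insert hd, map_add, h1, hm]
        simp; ring
      · intro p i
        rw [Finset.sum_insert hd, map_add, map_add, h2, hm]
        simp [dForm_apply, Pi.single_apply, pderiv_X]
        split_ifs <;> simp <;> ring
  exact key _ subset_rfl

lemma exists_gen {k : Type*} [Field k] (W : Submodule k (V4 k)) (hW : Module.finrank k W = 2)
    (p : V4 k) (hp : p ≠ 0) (hpW : p ∈ W) :
    ∃ w ∈ W, (∀ x ∈ W, ∃ s t : k, x = s • p + t • w) ∧ ∀ c : k, w ≠ c • p := by
  have h1 : Submodule.span k {p} ≤ W := by simpa using hpW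
  have h2 : Submodule.span k {p} ≠ W := by
    intro h; rw [← h, finrank_span_singleton hp] at hW; omega
  obtain ⟨w, hw, hwp⟩ := SetLike.exists_of_lt (lt_of_le_of_ne h1 h2)
  refine ⟨w, hw, ?_, fun c hc => hwp (Submodule.mem_span_singleton.2 ⟨c, hc.symm⟩)⟩
  have h3 : Submodule.span k {p, w} ≤ W := by
    rw [Submodule.span_le]; rintro x (rfl | rfl) <;> assumption
  have h4 : Submodule.span k {p} < Submodule.span k {p, w} := by
    refine SetLike.lt_iff_le_and_exists.2 ⟨Submodule.span_mono (by simp), w, ?_, hwp⟩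
    exact Submodule.subset_span (by simp)
  have h5 := Submodule.finrank_lt_finrank_of_lt h4
  rw [finrank_span_singleton hp] at h5
  have h6 := Submodule.eq_of_le_of_finrank_le h3 (by omega)
  intro x hx
  rw [← h6, Submodule.mem_span_pair] at hx
  obtain ⟨s, t, h⟩ := hx
  exact ⟨s, t, h.symm⟩

lemma tangent {k : Type*} [Field k] [IsAlgClosed k] (B : Tri k) (p : V4 k)
    (W : Submodule k (V4 k)) (hp : p ∈ W) (h : ∀ x ∈ W, B x x x = 0) :
    ∀ x ∈ W, dForm B p x = 0 ∧ B p x x + B x p x + B x x p = 0 := by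
  classical
  intro x hx
  obtain ⟨s, hs⟩ := Set.Infinite.exists_notMem_finset (Set.infinite_univ (α := k)) ({0, 1} : Finset k)
  simp only [Set.mem_univ, Finset.mem_insert, Finset.mem_singleton, not_or, true_and] at hs
  have e0 := h x hx
  have ep := h p hp
  have e1 := h (p + x) (W.add_mem hp hx)
  have es := h (s • p + x) (W.add_mem (W.smul_mem s hp) hx)
  simp only [map_add, map_smul, LinearMap.add_apply, LinearMap.smul_apply, smul_eq_mul] at e1 es
  have hs' : s * (s - 1) ≠ 0 := mul_ne_zero hs.1 (sub_ne_zero.2 hs.2)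
  have hd : dForm B p x = 0 := by
    apply (mul_eq_zero.1 (_ : s * (s - 1) * dForm B p x = 0)).resolve_left hs'
    rw [dForm_apply]
    linear_combination es - s * e1 + (s - 1) * e0 - (s ^ 3 - s) * ep
  refine ⟨hd, ?_⟩
  rw [dForm_apply] at hd
  linear_combination e1 - e0 - ep - hd

lemma cone {k : Type*} [Field k] [IsAlgClosed k] (B : Tri k) (p : V4 k) (hp : p ≠ 0)
    (hsm : dForm B p ≠ 0) (W₁ W₂ W₃ : Submodule k (V4 k))
    (h12 : W₁ ≠ W₂) (h13 : W₁ ≠ W₃) (h23 : W₂ ≠ W₃)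
    (f1 : Module.finrank k W₁ = 2) (f2 : Module.finrank k W₂ = 2) (f3 : Module.finrank k W₃ = 2)
    (v1 : ∀ x ∈ W₁, B x x x = 0) (v2 : ∀ x ∈ W₂, B x x x = 0) (v3 : ∀ x ∈ W₃, B x x x = 0)
    (p1 : p ∈ W₁) (p2 : p ∈ W₂) (p3 : p ∈ W₃) :
    ∀ x, dForm B p x = 0 → ∀ s : k, B (s • p + x) (s • p + x) (s • p + x) = B x x x := by
  have t1 := tangent B p W₁ p1 v1
  have t2 := tangent B p W₂ p2 v2
  have t3 := tangent B p W₃ p3 v3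
  have hker : Module.finrank k (LinearMap.ker (dForm B p)) ≤ 3 := by
    have := LinearMap.finrank_range_add_finrank_ker (dForm B p)
    rw [LinearMap.range_eq_top.2 (LinearMap.surjective hsm)] at this
    simp at this
    omega
  have hle : W₁ ⊔ W₂ ≤ LinearMap.ker (dForm B p) :=
    sup_le (fun x hx => (t1 x hx).1) (fun x hx => (t2 x hx).1)
  have hlt : W₁ < W₁ ⊔ W₂ := by
    refine lt_of_le_of_ne le_sup_left fun h => h12 ?_
    exact (Submodule.eq_of_le_of_finrank_eq (by rw [h]; exact le_sup_right) (by omega)).symm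
  have hT : W₁ ⊔ W₂ = LinearMap.ker (dForm B p) := by
    apply Submodule.eq_of_le_of_finrank_le hle
    have := Submodule.finrank_lt_finrank_of_lt hlt
    omega
  obtain ⟨w1, hw1, g1, -⟩ := exists_gen W₁ f1 p hp p1
  obtain ⟨w2, hw2, g2, -⟩ := exists_gen W₂ f2 p hp p2
  obtain ⟨w3, hw3, g3, -⟩ := exists_gen W₃ f3 p hp p3
  have dec : ∀ x, dForm B p x = 0 → ∃ a b c : k, x = a • p + b • w1 + c • w2 := by
    intro x hx
    have : x ∈ W₁ ⊔ W₂ := by rw [hT]; exact hx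
    obtain ⟨y, hy, z, hz, rfl⟩ := Submodule.mem_sup.1 this
    obtain ⟨a, b, rfl⟩ := g1 y hy
    obtain ⟨c, d, rfl⟩ := g2 z hz
    exact ⟨a + c, b, d, by module⟩
  have ep := v1 p p1
  have d1 := (t1 w1 hw1).1
  have d2 := (t2 w2 hw2).1
  have q1 := (t1 w1 hw1).2
  have q2 := (t2 w2 hw2).2
  have q3 := (t3 w3 hw3).2
  rw [dForm_apply] at d1 d2
  obtain ⟨a, b, c, h3⟩ := dec w3 (t3 w3 hw3).1
  have W3sub : ∀ Wi : Submodule k (V4 k), p ∈ Wi → w3 ∈ Wi → Module.finrank k Wi = 2 →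
      Wi = W₃ := by
    intro Wi h h' hf
    refine (Submodule.eq_of_le_of_finrank_eq ?_ (by omega)).symm
    intro x hx
    obtain ⟨s, t, rfl⟩ := g3 x hx
    exact Wi.add_mem (Wi.smul_mem _ h) (Wi.smul_mem _ h')
  have hb : b ≠ 0 := by
    rintro rfl
    apply h23 (W3sub W₂ p2 _ f2)
    rw [h3, zero_smul, add_zero]
    exact W₂.add_mem (W₂.smul_mem _ p2) (W₂.smul_mem _ hw2)
  have hc : c ≠ 0 := by
    rintro rfl
    apply h13 (W3sub W₁ p1 _ f1)
    rw [h3, zero_smul, add_zero]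
    exact W₁.add_mem (W₁.smul_mem _ p1) (W₁.smul_mem _ hw1)
  have M : B p w1 w2 + B p w2 w1 + B w1 p w2 + B w2 p w1 + B w1 w2 p + B w2 w1 p = 0 := by
    apply (mul_eq_zero.1 (_ : b * c * _ = 0)).resolve_left (mul_ne_zero hb hc)
    rw [h3] at q3
    simp only [map_add, map_smul, LinearMap.add_apply, LinearMap.smul_apply, smul_eq_mul] at q3
    linear_combination q3 - 3 * a ^ 2 * ep - 2 * a * b * d1 - 2 * a * c * d2 - b ^ 2 * q1
      - c ^ 2 * q2
  intro x hx s
  obtain ⟨a, b, c, rfl⟩ := dec x hx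
  simp only [map_add, map_smul, LinearMap.add_apply, LinearMap.smul_apply, smul_eq_mul]
  linear_combination ((s + a) ^ 3 - a ^ 3) * ep + ((s + a) ^ 2 - a ^ 2) * (b * d1 + c * d2)
    + s * (b ^ 2 * q1 + c ^ 2 * q2 + b * c * M)

/-- Splitting of the cubic form along two opposite cone vertices. -/
lemma split_form {k : Type*} [Field k] (B : Tri k) (p q y : V4 k) (s t : k)
    (hp : B (s • p + y) (s • p + y) (s • p + y) = B y y y)
    (hq : B (t • q + y) (t • q + y) (t • q + y) = B y y y) :
    B (s • p + t • q + y) (s • p + t • q + y) (s • p + t • q + y) = B y y y +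
      s * t * (s * dForm B p q + t * dForm B q p +
        (B p q y + B q p y + B p y q + B q y p + B y p q + B y q p)) := by
  simp only [map_add, map_smul, LinearMap.add_apply, LinearMap.smul_apply, smul_eq_mul,
    dForm_apply] at *
  linear_combination hp + hq

lemma transversal {k : Type*} [Field k] (B : Tri k) (p q : V4 k) 
    (hq : B q q q = 0)
    (hcone : ∀ x, dForm B p x = 0 → ∀ s : k,
      B (s • p + x) (s • p + x) (s • p + x) = B x x x)
    (h : ¬ ∀ s t : k, B (s • p + t • q) (s • p + t • q) (s • p + t • q) = 0) :
    dForm B p q ≠ 0 := by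
  intro h0
  apply h
  intro s t
  rw [hcone (t • q) (by simp [h0]) s]
  simp [hq]

lemma line_gen {k : Type*} [Field k] (L : Submodule k (V4 k)) (h : Module.finrank k L = 1) :
    ∃ p, p ≠ 0 ∧ L = Submodule.span k {p} := by
  obtain ⟨v, hv, h'⟩ := finrank_eq_one_iff'.1 h
  refine ⟨v, by simpa using hv, ?_⟩
  refine le_antisymm (fun x hx => ?_) (by simp)
  obtain ⟨c, hc⟩ := h' ⟨x, hx⟩
  exact Submodule.mem_span_singleton.2 ⟨c, congrArg Subtype.val hc⟩

lemma finrank_pair {k : Type*} [Field k] (p q : V4 k)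
    (h : ∀ s t : k, s • p + t • q = 0 → s = 0 ∧ t = 0) :
    Module.finrank k (Submodule.span k {p, q}) = 2 := by
  have : LinearIndependent k ![p, q] := LinearIndependent.pair_iff.2 h
  have := finrank_span_eq_card this
  rwa [Matrix.range_cons_cons_empty, Fintype.card_fin] at this


lemma third_line {k : Type*} [Field k] (B : Tri k) (p q : V4 k) (hp0 : p ≠ 0)
    (ha : dForm B p q ≠ 0) (hb : dForm B q p ≠ 0)
    (hpp : dForm B p p = 0)
    (hcp : ∀ x, dForm B p x = 0 → ∀ s : k,
      B (s • p + x) (s • p + x) (s • p + x) = B x x x)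
    (hcq : ∀ x, dForm B q x = 0 → ∀ s : k,
      B (s • q + x) (s • q + x) (s • q + x) = B x x x)
    (W : Submodule k (V4 k)) (hW : Module.finrank k W = 2) (hpW : p ∈ W)
    (hv : ∀ x ∈ W, B x x x = 0) (ht : ∀ x ∈ W, dForm B p x = 0) :
    ∃ W' : Submodule k (V4 k), Module.finrank k W' = 2 ∧
      dForm B q p • p - dForm B p q • q ∈ W' ∧ (∀ x ∈ W', B x x x = 0) ∧
      ∀ x, x ∈ W ↔ (dForm B p x = 0 ∧ ∃ c : k, x + c • p ∈ W') := by
  obtain ⟨w, hw, g, hwp⟩ := exists_gen W hW p hp0 hpW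
  obtain ⟨a, haa⟩ : ∃ a, a = dForm B p q := ⟨_, rfl⟩
  obtain ⟨b, hbb⟩ : ∃ b, b = dForm B q p := ⟨_, rfl⟩
  rw [← haa] at ha
  rw [← hbb] at hb
  rw [← haa, ← hbb]
  obtain ⟨y, hy⟩ : ∃ y, y = w - (dForm B q w / b) • p := ⟨_, rfl⟩
  have hyW : y ∈ W := hy ▸ W.sub_mem hw (W.smul_mem _ hpW)
  have hyp : dForm B p y = 0 := ht y hyW
  have hyq : dForm B q y = 0 := by
    rw [hy, map_sub, map_smul, ← hbb, smul_eq_mul]; field_simp; ring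
  obtain ⟨m, hm⟩ : ∃ m, m = B p q y + B q p y + B p y q + B q y p + B y p q + B y q p :=
    ⟨_, rfl⟩
  obtain ⟨z, hz⟩ : ∃ z, z = y - (m / a) • p := ⟨_, rfl⟩
  have hzp : dForm B p z = 0 := by rw [hz]; simp [hyp, hpp]
  have hzW : z ∈ W := hz ▸ W.sub_mem hyW (W.smul_mem _ hpW)
  have hr : dForm B p (b • p - a • q) = - (a * a) := by simp [hpp, ← haa]
  have haa' : a * a ≠ 0 := mul_ne_zero ha ha
  refine ⟨Submodule.span k {b • p - a • q, z}, ?_, ?_, ?_, ?_⟩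
  · apply finrank_pair
    intro s t h
    have h1 := congrArg (dForm B p) h
    rw [map_add, map_smul, map_smul, hr, hzp] at h1
    have hs : s = 0 := by simpa [ha] using h1
    refine ⟨hs, ?_⟩
    by_contra ht0
    rw [hs, zero_smul, zero_add, smul_eq_zero] at h
    have hz0 := h.resolve_left ht0
    apply hwp (m / a + dForm B q w / b)
    rw [hz, hy] at hz0
    rw [← sub_eq_zero, ← hz0]
    module
  · exact Submodule.subset_span (by simp)
  · intro x hx
    obtain ⟨s, t, rfl⟩ := Submodule.mem_span_pair.1 hx
    have e : s • (b • p - a • q) + t • z = (s * b - t * (m / a)) • p + (- s * a) • q + t • y := by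
      rw [hz]; module
    rw [e, split_form B p q (t • y) _ _ (hcp _ (by simp [hyp]) _) (hcq _ (by simp [hyq]) _),
      hv _ (W.smul_mem t hyW), ← haa, ← hbb]
    have : B p q (t • y) + B q p (t • y) + B p (t • y) q + B q (t • y) p + B (t • y) p q
        + B (t • y) q p = t * m := by
      rw [hm]; simp only [map_smul, LinearMap.smul_apply, smul_eq_mul]; ring
    rw [this]
    field_simp
    ring
  · intro x
    constructor
    · intro hx
      refine ⟨ht x hx, ?_⟩
      obtain ⟨s, t, rfl⟩ := g x hx
      refine ⟨- s - t * (m / a + dForm B q w / b), ?_⟩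
      have : s • p + t • w + (- s - t * (m / a + dForm B q w / b)) • p = t • z := by
        rw [hz, hy]; module
      rw [this]
      exact Submodule.smul_mem _ _ (Submodule.subset_span (by simp))
    · rintro ⟨hx, c, hc⟩
      obtain ⟨s, t, h⟩ := Submodule.mem_span_pair.1 hc
      have h1 := congrArg (dForm B p) h
      rw [map_add, map_smul, map_smul, hr, hzp, map_add, map_smul, hpp, hx] at h1
      have hs : s = 0 := by simpa [ha] using h1
      have : x = t • z - c • p := by
        rw [hs, zero_smul, zero_add] at h; rw [h]; module
      rw [this]
      exact W.sub_mem (W.smul_mem _ hzW) (W.smul_mem _ hpW)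

lemma span_eq_of_smul {k : Type*} [Field k] (p q : V4 k) (c : k) (hq : q ≠ 0) (h : q = c • p) :
    Submodule.span k {q} = Submodule.span k {p} := by
  have hc : c ≠ 0 := by rintro rfl; exact hq (by simp [h])
  rw [h]
  exact Submodule.span_singleton_smul_eq (IsUnit.mk0 c hc) p

/-- If a projective line `ℓ` not contained in the smooth cubic
surface `V(F)` contains at least two Eckardt points of `V(F)`, then it contains
exactly three Eckardt points of `V(F)` (so `ℓ` is a trihedral line). -/
theorem stmt3 {k : Type*} [Field k] [IsAlgClosed k]
    (F : MvPolynomial (Fin 4) k) (hF0 : F ≠ 0) (hhom : F.IsHomogeneous 3)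
    (hsmooth : ∀ x : Fin 4 → k,
      eval x F = 0 → (∀ i, eval x (pderiv i F) = 0) → x = 0)
    (W : Submodule k (Fin 4 → k)) (hW : Module.finrank k W = 2)
    (hWF : ¬ VanishesOn F W)
    (L₁ L₂ : Submodule k (Fin 4 → k)) (hne : L₁ ≠ L₂)
    (h₁ : IsEckardtPoint F L₁ ∧ L₁ ≤ W) (h₂ : IsEckardtPoint F L₂ ∧ L₂ ≤ W) :
    {L : Submodule k (Fin 4 → k) | IsEckardtPoint F L ∧ L ≤ W}.Finite ∧
    {L : Submodule k (Fin 4 → k) | IsEckardtPoint F L ∧ L ≤ W}.ncard = 3 := by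
  obtain ⟨B, hB, hD⟩ := exists_tri F hhom
  have hd0 : ∀ p, p ≠ 0 → B p p p = 0 → dForm B p ≠ 0 := by
    intro p hp hp' h
    exact hp (hsmooth p (by rw [hB, hp']) (fun i => by rw [hD, h]; rfl))
  obtain ⟨⟨fL1, A1, A2, A3, n12, n13, n23, ⟨fA1, vA1⟩, ⟨fA2, vA2⟩, ⟨fA3, vA3⟩,
    LA1, LA2, LA3⟩, hL1W⟩ := h₁
  obtain ⟨⟨fL2, C1, C2, C3, m12, m13, m23, ⟨fC1, vC1⟩, ⟨fC2, vC2⟩, ⟨fC3, vC3⟩,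
    LC1, LC2, LC3⟩, hL2W⟩ := h₂
  have E1 : IsEckardtPoint F L₁ := ⟨fL1, A1, A2, A3, n12, n13, n23, ⟨fA1, vA1⟩, ⟨fA2, vA2⟩,
    ⟨fA3, vA3⟩, LA1, LA2, LA3⟩
  have E2 : IsEckardtPoint F L₂ := ⟨fL2, C1, C2, C3, m12, m13, m23, ⟨fC1, vC1⟩, ⟨fC2, vC2⟩,
    ⟨fC3, vC3⟩, LC1, LC2, LC3⟩
  simp only [VanishesOn, hB] at vA1 vA2 vA3 vC1 vC2 vC3 hWF
  obtain ⟨p, hp0, rfl⟩ := line_gen L₁ fL1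
  obtain ⟨q, hq0, rfl⟩ := line_gen L₂ fL2
  rw [Submodule.span_singleton_le_iff_mem] at LA1 LA2 LA3 LC1 LC2 LC3 hL1W hL2W
  have fp := vA1 p LA1
  have fq := vC1 q LC1
  have hcp := cone B p hp0 (hd0 p hp0 fp) A1 A2 A3 n12 n13 n23 fA1 fA2 fA3 vA1 vA2 vA3 LA1 LA2 LA3
  have hcq := cone B q hq0 (hd0 q hq0 fq) C1 C2 C3 m12 m13 m23 fC1 fC2 fC3 vC1 vC2 vC3 LC1 LC2 LC3
  have hpp : dForm B p p = 0 := by rw [dForm_apply, fp]; ring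
  have hqq : dForm B q q = 0 := by rw [dForm_apply, fq]; ring
  have hWgen : ∀ x ∈ W, ∃ s t : k, x = s • p + t • q := by
    obtain ⟨w, hw, g, -⟩ := exists_gen W hW p hp0 hL1W
    obtain ⟨a, b, hab⟩ := g q hL2W
    have hb : b ≠ 0 := by
      rintro rfl
      rw [zero_smul, add_zero] at hab
      exact hne (span_eq_of_smul p q a hq0 hab).symm
    intro x hx
    obtain ⟨s, t, rfl⟩ := g x hx
    refine ⟨s - t / b * a, t / b, ?_⟩
    have : (t / b) * b = t := by field_simp
    calc s • p + t • w = s • p + ((t / b) * b) • w := by rw [this]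
      _ = _ := by rw [hab]; module
  have hnv : ¬ ∀ s t : k, B (s • p + t • q) (s • p + t • q) (s • p + t • q) = 0 := by
    intro h
    apply hWF
    intro x hx
    obtain ⟨s, t, rfl⟩ := hWgen x hx
    exact h s t
  have ha := transversal B p q fq hcp hnv
  have hb := transversal B q p fp hcq (fun h => hnv fun s t => by
    rw [add_comm]; exact h t s)
  obtain ⟨D1, fD1, rD1, vD1, iD1⟩ := third_line B p q hp0 ha hb hpp hcp hcq A1 fA1 LA1 vA1
    (fun x hx => (tangent B p A1 LA1 vA1 x hx).1)
  obtain ⟨D2, fD2, rD2, vD2, iD2⟩ := third_line B p q hp0 ha hb hpp hcp hcq A2 fA2 LA2 vA2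
    (fun x hx => (tangent B p A2 LA2 vA2 x hx).1)
  obtain ⟨D3, fD3, rD3, vD3, iD3⟩ := third_line B p q hp0 ha hb hpp hcp hcq A3 fA3 LA3 vA3
    (fun x hx => (tangent B p A3 LA3 vA3 x hx).1)
  obtain ⟨r, hr⟩ : ∃ r, r = dForm B q p • p - dForm B p q • q := ⟨_, rfl⟩
  rw [← hr] at rD1 rD2 rD3
  have hrp : dForm B p r ≠ 0 := by rw [hr]; simp [hpp, ha]
  have hrq : dForm B q r ≠ 0 := by rw [hr]; simp [hqq, hb]
  have hr0 : r ≠ 0 := by rintro h; rw [h] at hrp; simp at hrp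
  have E3 : IsEckardtPoint F (Submodule.span k {r}) := by
    refine ⟨finrank_span_singleton hr0, D1, D2, D3, ?_, ?_, ?_, ⟨fD1, ?_⟩, ⟨fD2, ?_⟩, ⟨fD3, ?_⟩,
      ?_, ?_, ?_⟩
    · rintro rfl; exact n12 (by ext x; rw [iD1, iD2])
    · rintro rfl; exact n13 (by ext x; rw [iD1, iD3])
    · rintro rfl; exact n23 (by ext x; rw [iD2, iD3])
    · intro x hx; rw [hB]; exact vD1 x hx
    · intro x hx; rw [hB]; exact vD2 x hx
    · intro x hx; rw [hB]; exact vD3 x hx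
    all_goals rwa [Submodule.span_singleton_le_iff_mem]
  have hrW : r ∈ W := hr ▸ W.sub_mem (W.smul_mem _ hL1W) (W.smul_mem _ hL2W)
  have hset : {L : Submodule k (Fin 4 → k) | IsEckardtPoint F L ∧ L ≤ W} =
      {Submodule.span k {p}, Submodule.span k {q}, Submodule.span k {r}} := by
    ext L
    simp only [Set.mem_ofPred_eq, Set.mem_insert_iff, Set.mem_singleton_iff]
    constructor
    · rintro ⟨⟨fL, U, -, -, -, -, -, ⟨-, vU⟩, -, -, hU, -, -⟩, hLW⟩
      obtain ⟨x, hx0, rfl⟩ := line_gen L fL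
      rw [Submodule.span_singleton_le_iff_mem] at hU hLW
      have hx := vU x hU
      rw [hB] at hx
      obtain ⟨s, t, rfl⟩ := hWgen x hLW
      have hsp := split_form B p q 0 s t (hcp 0 (map_zero _) s) (hcq 0 (map_zero _) t)
      simp only [add_zero, hx, map_zero, LinearMap.zero_apply, zero_add] at hsp
      rcases mul_eq_zero.1 hsp.symm with h | h
      · rcases mul_eq_zero.1 h with rfl | rfl
        · exact Or.inr (Or.inl (span_eq_of_smul q _ t hx0 (by simp)))
        · exact Or.inl (span_eq_of_smul p _ s hx0 (by simp))
      · refine Or.inr (Or.inr (span_eq_of_smul r _ (s / dForm B q p) hx0 ?_))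
        have ht : t = - (s / dForm B q p * dForm B p q) := by
          field_simp; linear_combination h
        have hs : s = s / dForm B q p * dForm B q p := by field_simp
        calc s • p + t • q = (s / dForm B q p * dForm B q p) • p
              + (- (s / dForm B q p * dForm B p q)) • q := by rw [← hs, ← ht]
          _ = _ := by rw [hr]; module
    · rintro (rfl | rfl | rfl)
      · exact ⟨E1, by rwa [Submodule.span_singleton_le_iff_mem]⟩
      · exact ⟨E2, by rwa [Submodule.span_singleton_le_iff_mem]⟩
      · exact ⟨E3, by rwa [Submodule.span_singleton_le_iff_mem]⟩
  have npr : Submodule.span k {p} ≠ Submodule.span k {r} := by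
    intro h
    have : r ∈ Submodule.span k {p} := h ▸ Submodule.mem_span_singleton_self r
    obtain ⟨c, hc⟩ := Submodule.mem_span_singleton.1 this
    exact hrp (by rw [← hc, map_smul, hpp, smul_zero])
  have nqr : Submodule.span k {q} ≠ Submodule.span k {r} := by
    intro h
    have : r ∈ Submodule.span k {q} := h ▸ Submodule.mem_span_singleton_self r
    obtain ⟨c, hc⟩ := Submodule.mem_span_singleton.1 this
    exact hrq (by rw [← hc, map_smul, hqq, smul_zero])
  rw [hset]
  exact ⟨Set.toFinite _, Set.ncard_eq_three.2 ⟨_, _, _, hne, npr, nqr, rfl⟩⟩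
end

section
/- Assume char k = 5. Let F be a nonzero homogeneous polynomial of degree 3 in k[x₀,x₁,x₂,x₃] such that the cubic surface V(F) is smooth. If A ∈ GL₄(k) satisfies A⁵ = I and A leaves V(F) invariant, then A = I. (Equivalently: in characteristic 5 there is no smooth cubic surface admitting a projective automorphism of order 5.) -/
open MvPolynomial Matrix

lemma cert1 {k : Type*} [Field k] (h5 : (5 : k) = 0) (t : ℕ → ℕ → ℕ → k)
    (sym : ∀ a b c, t a b c = t b a c)
    (R : ∀ a b c, t (a+1) (b+1) (c+1) + t (a+1) (b+1) c + t (a+1) b (c+1) + t a (b+1) (c+1)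
      + t (a+1) b c + t a (b+1) c + t a b (c+1) = 0)
    (hy : ∀ a c, t a 2 c = 0) (hz : ∀ a b, t a b 2 = 0) : t 1 1 0 = 0 := by
  have r0 := R 0 1 1
  have r1 := R 0 0 1
  have r2 := R 0 1 0
  simp only [Nat.reduceAdd, sym 1 0 1, sym 1 0 2, hy, hz] at r0 r1 r2
  linear_combination 2 * r0 + 2 * r1 + 1 * r2
    - h5 * (t 1 1 1 + t 0 1 1)

lemma cert2 {k : Type*} [Field k] (h5 : (5 : k) = 0) (t : ℕ → ℕ → ℕ → k)
    (sym : ∀ a b c, t a b c = t b a c)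
    (R : ∀ a b c, t (a+1) (b+1) (c+1) + t (a+1) (b+1) c + t (a+1) b (c+1) + t a (b+1) (c+1)
      + t (a+1) b c + t a (b+1) c + t a b (c+1) = 0)
    (hy : ∀ a c, t a 3 c = 0) (hz : ∀ a b, t a b 3 = 0) : t 2 2 0 = 0 := by
  have r0 := R 1 2 0
  have r1 := R 0 1 2
  have r2 := R 1 1 2
  have r3 := R 2 2 0
  have r4 := R 1 1 1
  have r5 := R 0 2 1
  simp only [Nat.reduceAdd, sym 2 1 1, sym 2 1 2, sym 2 1 3, sym 3 2 0, sym 3 2 1, hy, hz] at r0 r1 r2 r3 r4 r5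
  linear_combination 1 * r0 + 2 * r1 + 2 * r2 + 1 * r3 + 3 * r4 + 3 * r5
    - h5 * (2 * t 1 2 1 + t 2 2 1 + t 0 2 2 + t 1 1 2 + 3 * t 1 2 2 + t 2 2 2)

lemma cert3 {k : Type*} [Field k] (h5 : (5 : k) = 0) (t : ℕ → ℕ → ℕ → k)
    (sym : ∀ a b c, t a b c = t b a c)
    (R : ∀ a b c, t (a+1) (b+1) (c+1) + t (a+1) (b+1) c + t (a+1) b (c+1) + t a (b+1) (c+1)
      + t (a+1) b c + t a (b+1) c + t a b (c+1) = 0)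
    (hy : ∀ a c, t a 4 c = 0) (hz : ∀ a b, t a b 4 = 0) : t 3 3 0 = 0 := by
  have r0 := R 2 3 0
  have r1 := R 1 3 1
  have r2 := R 3 3 1
  have r3 := R 1 2 2
  have r4 := R 1 2 3
  have r5 := R 1 3 2
  have r6 := R 3 3 0
  have r7 := R 1 1 3
  have r8 := R 2 2 1
  simp only [Nat.reduceAdd, sym 2 1 3, sym 2 1 4, sym 3 2 1, sym 3 2 2, sym 4 3 0, sym 4 3 1, sym 4 3 2, hy, hz] at r0 r1 r2 r3 r4 r5 r6 r7 r8
  linear_combination 1 * r0 + 3 * r1 + 2 * r2 + 2 * r3 + 4 * r4 + 4 * r5 + 1 * r6 + 4 * r7 + 3 * r8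
    - h5 * (2 * t 2 3 1 + t 3 3 1 + t 1 3 2 + 3 * t 2 3 2 + t 3 3 2 + 2 * t 1 2 3 + 2 * t 1 3 3 + t 2 2 2 + 2 * t 2 2 3 + 2 * t 2 3 3)


lemma pderiv_swap {k : Type*} [Field k] (i j : Fin 4) (F : MvPolynomial (Fin 4) k) :
    pderiv i (pderiv j F) = pderiv j (pderiv i F) := by
  have h : ⁅pderiv (R := k) i, pderiv j⁆ = (0 : Derivation k (MvPolynomial (Fin 4) k) _) := by
    apply MvPolynomial.derivation_ext
    intro l
    rw [Derivation.commutator_apply]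
    simp [pderiv_X, Pi.single_apply, apply_ite]
  have := congrArg (fun D => D F) h
  simp only [Derivation.commutator_apply, Derivation.zero_apply] at this
  exact sub_eq_zero.mp this

lemma exists_polar {k : Type*} [Field k] (F : MvPolynomial (Fin 4) k) (hhom : F.IsHomogeneous 3) :
    ∃ T : (Fin 4 → k) → (Fin 4 → k) → (Fin 4 → k) → k,
      (∀ x x' y z, T (x + x') y z = T x y z + T x' y z) ∧
      (∀ x y z, T x y z = T y x z) ∧ (∀ x y z, T x y z = T x z y) ∧
      (∀ x, 6 * eval x F = T x x x) ∧
      (∀ x i, 2 * eval x (pderiv i F) = T x x (Pi.single i 1)) := by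
  set c : Fin 4 → Fin 4 → Fin 4 → k := fun i j l =>
    constantCoeff (pderiv i (pderiv j (pderiv l F))) with hc
  have c1 : ∀ i j l, c i j l = c j i l := fun i j l => by
    simp only [hc]; rw [pderiv_swap]
  have c2 : ∀ i j l, c i j l = c i l j := fun i j l => by
    simp only [hc]; rw [pderiv_swap j l]
  have d3 : ∀ i j l (x : Fin 4 → k), eval x (pderiv i (pderiv j (pderiv l F))) = c i j l := by
    intro i j l x
    have h : (pderiv i (pderiv j (pderiv l F))).IsHomogeneous 0 :=
      ((hhom.pderiv (i := l)).pderiv (i := j)).pderiv (i := i)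
    rw [← totalDegree_zero_iff_isHomogeneous, totalDegree_eq_zero_iff_eq_C] at h
    simp only [hc]
    rw [h]
    simp
  have d2 : ∀ j l (x : Fin 4 → k), eval x (pderiv j (pderiv l F)) = ∑ i, x i * c i j l := by
    intro j l x
    have h := congrArg (eval x)
      ((hhom.pderiv (i := l)).pderiv (i := j)).sum_X_mul_pderiv
    simp only [map_sum, map_mul, eval_X, d3] at h
    rw [h]; simp
  have d1 : ∀ l (x : Fin 4 → k),
      2 * eval x (pderiv l F) = ∑ j, x j * ∑ i, x i * c i j l := by
    intro l x
    have h := congrArg (eval x) (hhom.pderiv (i := l)).sum_X_mul_pderiv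
    simp only [map_sum, map_mul, eval_X, d2] at h
    rw [h]; simp
  have d0 : ∀ (x : Fin 4 → k),
      6 * eval x F = ∑ l, x l * ∑ j, x j * ∑ i, x i * c i j l := by
    intro x
    have h := congrArg (eval x) hhom.sum_X_mul_pderiv
    simp only [map_sum, map_mul, eval_X, ← d1] at h ⊢
    simp only [nsmul_eq_mul, map_mul, Nat.cast_ofNat, map_ofNat] at h
    have : ∑ l, x l * (2 * eval x (pderiv l F)) = 2 * ∑ l, x l * eval x (pderiv l F) := by
      rw [Finset.mul_sum]; exact Finset.sum_congr rfl fun _ _ => by ring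
    rw [this, h]; ring
  refine ⟨fun x y z => ∑ l, z l * ∑ j, y j * ∑ i, x i * c i j l, ?_, ?_, ?_, d0, ?_⟩
  · intro x x' y z
    simp only [Pi.add_apply, add_mul, mul_add, Finset.sum_add_distrib]
  · intro x y z
    refine Finset.sum_congr rfl fun l _ => ?_
    congr 1
    simp only [Finset.mul_sum]
    rw [Finset.sum_comm]
    refine Finset.sum_congr rfl fun i _ => Finset.sum_congr rfl fun j _ => ?_
    rw [c1]; ring
  · intro x y z
    simp only [Finset.mul_sum]
    rw [Finset.sum_comm]
    refine Finset.sum_congr rfl fun i _ => Finset.sum_congr rfl fun j _ =>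
      Finset.sum_congr rfl fun l _ => ?_
    rw [c2]; ring
  · intro x l
    rw [d1]
    simp [Pi.single_apply]

lemma eval_substMatrix {k : Type*} [Field k] (A : Matrix (Fin 4) (Fin 4) k)
    (F : MvPolynomial (Fin 4) k) (x : Fin 4 → k) :
    eval x (substMatrix A F) = eval (A *ᵥ x) F := by
  unfold substMatrix
  rw [← MvPolynomial.coe_aeval_eq_eval, ← MvPolynomial.coe_aeval_eq_eval]
  change ((aeval x).comp (aeval fun i => ∑ j, C (A i j) * X j)) F = _
  rw [MvPolynomial.comp_aeval]
  change aeval _ F = aeval _ F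
  congr 2
  ext i
  simp [Matrix.mulVec, dotProduct]

/-- In characteristic `5` there is no smooth cubic surface
admitting a projective automorphism of order `5`: any `A ∈ GL₄(k)` with
`A⁵ = 1` leaving a smooth cubic surface invariant is the identity. -/
theorem stmt6 {k : Type*} [Field k] [IsAlgClosed k] (hchar : ringChar k = 5)
    (F : MvPolynomial (Fin 4) k) (hF0 : F ≠ 0) (hhom : F.IsHomogeneous 3)
    (hsmooth : ∀ x : Fin 4 → k,
      eval x F = 0 → (∀ i, eval x (pderiv i F) = 0) → x = 0)
    (A : Matrix (Fin 4) (Fin 4) k) (hA5 : A ^ 5 = 1)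
    (hinv : LeavesInvariant A F) :
    A = 1 := by
  have : CharP k 5 := hchar ▸ ringChar.charP k
  have : Fact (Nat.Prime 5) := ⟨by norm_num⟩
  have h5 : (5 : k) = 0 := by exact_mod_cast CharP.cast_eq_zero k 5
  have h6 : (6 : k) ≠ 0 := by
    have : (6 : k) = 1 := by linear_combination h5
    rw [this]; exact one_ne_zero
  have h2 : (2 : k) ≠ 0 := fun h => by
    have : (1 : k) = 0 := by linear_combination h5 - 2 * h
    exact one_ne_zero this
  obtain ⟨lam, hlam⟩ := hinv
  obtain ⟨T, hadd, s12, s23, hT, hdT⟩ := exists_polar F hhom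
  have hev : ∀ x, eval (A *ᵥ x) F = lam * eval x F := fun x => by
    rw [← eval_substMatrix, hlam, smul_eval]
  -- the multiplier is trivial
  have hpow : ∀ (n : ℕ) x, eval ((A ^ n) *ᵥ x) F = (lam : k) ^ n * eval x F := by
    intro n
    induction n with
    | zero => intro x; simp
    | succ n ih =>
      intro x
      rw [pow_succ, ← Matrix.mulVec_mulVec, ih, hev]; ring
  have hlam1 : (lam : k) = 1 := by
    obtain ⟨x, hx⟩ : ∃ x, eval x F ≠ 0 := by
      by_contra! h
      exact hF0 (MvPolynomial.funext fun x => by simp [h x])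
    have h := hpow 5 x
    rw [hA5, Matrix.one_mulVec] at h
    have h' : (lam : k) ^ 5 = 1 := by
      have : ((lam : k) ^ 5 - 1) * eval x F = 0 := by linear_combination -h
      exact sub_eq_zero.mp ((mul_eq_zero.mp this).resolve_right hx)
    have h'' : ((lam : k) - 1) ^ 5 = 0 := by
      rw [sub_pow_char, h']; simp
    exact sub_eq_zero.mp (pow_eq_zero_iff (by norm_num) |>.mp h'')
  have hG : ∀ x, T (A *ᵥ x) (A *ᵥ x) (A *ᵥ x) = T x x x := fun x => by
    rw [← hT, ← hT, hev, hlam1, one_mul]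
  have add2 : ∀ x y y' z, T x (y + y') z = T x y z + T x y' z := fun x y y' z => by
    rw [s12, hadd, s12 y, s12 y']
  have add3 : ∀ x y z z', T x y (z + z') = T x y z + T x y z' := fun x y z z' => by
    rw [s23, add2, s23 x z, s23 x z']
  have pol : ∀ x y z, 6 * T x y z = T (x + y + z) (x + y + z) (x + y + z)
      - T (x + y) (x + y) (x + y) - T (x + z) (x + z) (x + z) - T (y + z) (y + z) (y + z)
      + T x x x + T y y y + T z z z := by
    intro x y z
    simp only [hadd, add2, add3]
    rw [s23 x z y, s12 y x z, s23 y z x, s12 y x z, s12 z x y, s23 x z y, s12 z y x,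
      s23 y z x, s12 y x z]
    ring
  have hTA : ∀ x y z, T (A *ᵥ x) (A *ᵥ y) (A *ᵥ z) = T x y z := by
    intro x y z
    apply mul_left_cancel₀ h6
    rw [pol, pol x y z]
    simp only [← Matrix.mulVec_add, hG]
  have T0 : ∀ x z, T x 0 z = 0 := fun x z => by
    have := add2 x 0 0 z
    rw [add_zero] at this
    exact left_eq_add.mp this
  have T0' : ∀ x z, T x z 0 = 0 := fun x z => by rw [s23, T0]
  -- the nilpotent part
  set N := A - 1 with hN
  have hAN : ∀ x, A *ᵥ x = x + N *ᵥ x := fun x => by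
    rw [hN, Matrix.sub_mulVec, Matrix.one_mulVec]; abel
  have N5 : N ^ 5 = 0 := by
    rw [hN, sub_pow_char_of_commute (p := 5) (Commute.one_right A), hA5]; simp
  have N4 : N ^ 4 = 0 := by
    have h := Module.End.ker_pow_le_ker_pow_finrank (Matrix.toLin' N) 5
    rw [← Matrix.toLin'_pow, N5, Module.finrank_fin_fun, ← Matrix.toLin'_pow] at h
    apply Matrix.toLin'.injective
    rw [map_zero]
    apply LinearMap.ext
    intro x
    exact LinearMap.mem_ker.mp (h (by simp))
  -- the key vanishing
  have key : ∀ m, (m = 1 ∨ m = 2 ∨ m = 3) → N ^ (m + 1) = 0 → N ^ m = 0 := by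
    intro m hm hNm
    have hv : ∀ y, (N ^ m) *ᵥ y = 0 := by
      intro y
      have hz : ∀ z, T ((N ^ m) *ᵥ y) ((N ^ m) *ᵥ y) z = 0 := by
        intro z
        let t : ℕ → ℕ → ℕ → k := fun a b c =>
          T ((N ^ a) *ᵥ y) ((N ^ b) *ᵥ y) ((N ^ c) *ᵥ z)
        have sym : ∀ a b c, t a b c = t b a c := fun a b c => s12 _ _ _
        have R : ∀ a b c, t (a+1) (b+1) (c+1) + t (a+1) (b+1) c + t (a+1) b (c+1)
            + t a (b+1) (c+1) + t (a+1) b c + t a (b+1) c + t a b (c+1) = 0 := by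
          intro a b c
          have h := hTA ((N ^ a) *ᵥ y) ((N ^ b) *ᵥ y) ((N ^ c) *ᵥ z)
          simp only [hAN, hadd, add2, add3, Matrix.mulVec_mulVec, ← pow_succ'] at h
          simp only [t]
          linear_combination h
        have hy : ∀ a c, t a (m + 1) c = 0 := fun a c => by simp [t, hNm, T0]
        have hz : ∀ a b, t a b (m + 1) = 0 := fun a b => by simp [t, hNm, T0']
        have : t m m 0 = 0 := by
          rcases hm with rfl | rfl | rfl
          · exact cert1 h5 t sym R hy hz
          · exact cert2 h5 t sym R hy hz
          · exact cert3 h5 t sym R hy hz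
        simpa [t] using this
      apply hsmooth
      · exact (mul_eq_zero.mp ((hT _).trans (hz _))).resolve_left h6
      · intro i
        exact (mul_eq_zero.mp ((hdT _ i).trans (hz _))).resolve_left h2
    apply Matrix.toLin'.injective
    apply LinearMap.ext
    intro x
    rw [Matrix.toLin'_apply, hv x, map_zero, LinearMap.zero_apply]
  have N1 : N ^ 1 = 0 :=
    key 1 (by simp) (key 2 (by simp) (key 3 (by simp) N4))
  rw [pow_one, hN] at N1
  exact sub_eq_zero.mp N1
end

section
/- Assume char k = 2 and let F be a homogeneous polynomial of degree 3 in k[x₀,x₁,x₂,x₃]. For distinct indices i < j < l, let a_{ijl} denote the coefficient of the monomial xᵢxⱼx_l in F, and set v = (a₁₂₃, a₀₂₃, a₀₁₃, a₀₁₂) ∈ k⁴. Let H(F) be the 4×4 Hessian matrix whose (i,j) entry is ∂²F/∂xᵢ∂xⱼ ∈ k[x₀,…,x₃]. Then: (i) for every y ∈ k⁴, the evaluated matrix H(F)(y) satisfies H(F)(y)·v = 0; (ii) the polar polynomial Σᵢ vᵢ·∂F/∂xᵢ is the square of a homogeneous linear polynomial; and (iii) if H(F) is not identically the zero matrix, then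 every w ∈ k⁴ with H(F)(y)·w = 0 for all y ∈ k⁴ is a scalar multiple of v. -/
open MvPolynomial Matrix

/-- The vector `v = (a₁₂₃, a₀₂₃, a₀₁₃, a₀₁₂)` of coefficients of the squarefree
cubic monomials of `F`: `v i` is the coefficient of the product of the three
variables other than `xᵢ`. -/
noncomputable def tripleCoeffVec {k : Type*} [Field k]
    (F : MvPolynomial (Fin 4) k) : Fin 4 → k :=
  fun i => F.coeff (∑ j ∈ Finset.univ.erase i, Finsupp.single j 1)

/-- The Hessian matrix of `F`, an entrywise-polynomial `4 × 4` matrix whose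
`(i,j)` entry is `∂²F/∂xᵢ∂xⱼ`, evaluated at the point `y ∈ k⁴`. -/
noncomputable def hessianAt {k : Type*} [Field k]
    (F : MvPolynomial (Fin 4) k) (y : Fin 4 → k) : Matrix (Fin 4) (Fin 4) k :=
  Matrix.of fun i j => eval y (pderiv i (pderiv j F))


def trip {k : Type*} [Field k] (v : Fin 4 → k) (i j l : Fin 4) : k :=
  if i = j ∨ j = l ∨ i = l then 0 else v (2 - i - j - l)

lemma exp_eq : ∀ i j l : Fin 4, ¬ (i = j ∨ j = l ∨ i = l) →
    (Finset.univ.erase (2 - i - j - l) : Finset (Fin 4)) = {i, j, l} := by decide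

lemma coeff_trip {k : Type*} [Field k] (F : MvPolynomial (Fin 4) k) (i j l : Fin 4)
    (h : ¬ (i = j ∨ j = l ∨ i = l)) :
    F.coeff (Finsupp.single l 1 + Finsupp.single i 1 + Finsupp.single j 1) =
      tripleCoeffVec F (2 - i - j - l) := by
  unfold tripleCoeffVec
  rw [exp_eq i j l h]
  push Not at h
  rw [Finset.sum_insert (by simp [h.1, h.2.2]), Finset.sum_insert (by simp [h.2.1]),
    Finset.sum_singleton]
  congr 1
  abel

lemma coeff_hess {k : Type*} [Field k] [CharP k 2] (F : MvPolynomial (Fin 4) k)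
    (i j l : Fin 4) :
    (pderiv i (pderiv j F)).coeff (Finsupp.single l 1) = trip (tripleCoeffVec F) i j l := by
  have h2 : (1 + 1 : k) = 0 := CharTwo.add_self_eq_zero 1
  rw [coeff_pderiv, coeff_pderiv]
  unfold trip
  split_ifs with h
  · by_cases h1 : l = i
    · subst h1
      simp [h2]
    · have : j = i ∨ j = l := by tauto
      rcases this with h3 | h3 <;> subst h3 <;> simp [h1, Ne.symm h1, h2]
  · rw [coeff_trip F i j l h]
    push Not at h
    simp [h.1, h.2.1, h.2.2, Ne.symm h.2.1, Ne.symm h.2.2]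

lemma deg_one (m : Fin 4 →₀ ℕ) (hm : m.degree = 1) : ∃ a, m = Finsupp.single a 1 := by
  have hsum : m 0 + m 1 + m 2 + m 3 = 1 := by
    rw [← hm, Finsupp.degree_eq_sum, Fin.sum_univ_four]
  have : ∃ i, m i = 1 := by
    by_contra hc
    push Not at hc
    have := hc 0
    have := hc 1
    have := hc 2
    have := hc 3
    omega
  obtain ⟨i, hi⟩ := this
  refine ⟨i, ?_⟩
  ext j
  by_cases hij : i = j
  · subst hij
    simpa using hi
  · rw [Finsupp.single_eq_of_ne (Ne.symm hij)]
    fin_cases i <;> fin_cases j <;> simp at hi hij ⊢ <;> omega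

lemma lin_form {k : Type*} [Field k] (G : MvPolynomial (Fin 4) k) (h : G.IsHomogeneous 1) :
    G = ∑ l, C (G.coeff (Finsupp.single l 1)) * X l := by
  ext m
  by_cases hm : m.degree = 1
  · obtain ⟨a, rfl⟩ := deg_one m hm
    simp [coeff_sum, coeff_C_mul, coeff_X, Finsupp.single_left_inj]
  · rw [h.coeff_eq_zero hm, coeff_sum, Finset.sum_eq_zero]
    intro l _
    rw [coeff_C_mul, coeff_X, if_neg, mul_zero]
    rintro rfl
    simp at hm

lemma hess_eq {k : Type*} [Field k] [CharP k 2] (F : MvPolynomial (Fin 4) k)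
    (hF : F.IsHomogeneous 3) (i j : Fin 4) :
    pderiv i (pderiv j F) = ∑ l, C (trip (tripleCoeffVec F) i j l) * X l := by
  rw [lin_form _ (hF.pderiv.pderiv : (pderiv i (pderiv j F)).IsHomogeneous 1)]
  simp only [coeff_hess]

lemma trip_sum {k : Type*} [Field k] [CharP k 2] (v : Fin 4 → k) (i l : Fin 4) :
    ∑ j, trip v i j l * v j = 0 := by
  fin_cases i <;> fin_cases l <;>
    simp [Fin.sum_univ_four, trip, mul_comm, CharTwo.add_self_eq_zero, show (2 : Fin 4) - 3 = 3 from rfl,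
      show (-1 : Fin 4) = 3 from rfl, show (-3 : Fin 4) = 1 from rfl]

/-- For a cubic form `F` in characteristic 2 with
`v = (a₁₂₃, a₀₂₃, a₀₁₃, a₀₁₂)`:
(i) `H(F)(y)·v = 0` for every `y`;
(ii) the polar `Σᵢ vᵢ ∂F/∂xᵢ` is the square of a homogeneous linear form;
(iii) if the Hessian matrix is not identically zero, then `v` is the unique
such vector up to scalar. -/
theorem stmt8 {k : Type*} [Field k] [IsAlgClosed k] (hchar : ringChar k = 2)
    (F : MvPolynomial (Fin 4) k) (hhom : F.IsHomogeneous 3) :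
    (∀ y : Fin 4 → k, (hessianAt F y).mulVec (tripleCoeffVec F) = 0) ∧
    (∃ L : MvPolynomial (Fin 4) k, L.IsHomogeneous 1 ∧
      (∑ i, C (tripleCoeffVec F i) * pderiv i F) = L ^ 2) ∧
    ((¬ ∀ i j : Fin 4, pderiv i (pderiv j F) = 0) →
      ∀ w : Fin 4 → k, (∀ y : Fin 4 → k, (hessianAt F y).mulVec w = 0) →
        ∃ c : k, w = c • tripleCoeffVec F) := by
  haveI : CharP k 2 := hchar ▸ ringChar.charP k
  have hmul : ∀ (w y : Fin 4 → k) (i : Fin 4), (hessianAt F y).mulVec w i =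
      ∑ l, (∑ j, trip (tripleCoeffVec F) i j l * w j) * y l := by
    intro w y i
    simp only [hessianAt, Matrix.mulVec, dotProduct, Matrix.of_apply, hess_eq F hhom, map_sum,
      map_mul, eval_C, eval_X, Finset.sum_mul]
    rw [Finset.sum_comm]
    refine Finset.sum_congr rfl fun l _ => Finset.sum_congr rfl fun j _ => by ring
  refine ⟨?_, ?_, ?_⟩
  · intro y
    ext i
    rw [hmul]
    simp [trip_sum]
  · set v := tripleCoeffVec F with hv
    set P := ∑ i, C (v i) * pderiv i F with hP
    have hPh : P.IsHomogeneous 2 := by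
      refine IsHomogeneous.sum _ _ _ fun i _ => ?_
      simpa using (isHomogeneous_C (Fin 4) (v i)).mul (hhom.pderiv (i := i))
    have hd : ∀ i, pderiv i P = 0 := by
      intro i
      simp only [hP, map_sum, pderiv_C_mul, hess_eq F hhom, ← hv, Finset.mul_sum, smul_eq_C_mul]
      rw [Finset.sum_comm]
      refine Finset.sum_eq_zero fun l _ => ?_
      simp only [← mul_assoc, ← C_mul, ← Finset.sum_mul, ← map_sum]
      simp_rw [mul_comm (v _)]
      rw [trip_sum]
      simp
    choose s hs using fun i => IsAlgClosed.exists_pow_nat_eq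
      (P.coeff (Finsupp.single i 2)) (n := 2) (by norm_num)
    refine ⟨∑ i, C (s i) * X i, ?_, ?_⟩
    · refine IsHomogeneous.sum _ _ _ fun i _ => ?_
      simpa using (isHomogeneous_C (Fin 4) (s i)).mul (isHomogeneous_X k i)
    · haveI : CharP (MvPolynomial (Fin 4) k) 2 := inferInstance
      rw [CharTwo.sum_sq]
      simp only [mul_pow, ← C_pow, hs]
      ext m
      simp only [coeff_sum, coeff_C_mul, coeff_X_pow]
      by_cases hm : ∃ i, m = Finsupp.single i 2
      · obtain ⟨i, rfl⟩ := hm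
        simp [Finsupp.single_left_inj]
      · rw [Finset.sum_eq_zero]
        · by_cases hdeg : m.degree = 2
          · obtain ⟨i, hi⟩ : ∃ i, m i = 1 := by
              by_contra hcon
              push Not at hcon hm
              have hsum : m 0 + m 1 + m 2 + m 3 = 2 := by
                rw [← hdeg, Finsupp.degree_eq_sum, Fin.sum_univ_four]
              have := hcon 0
              have := hcon 1
              have := hcon 2
              have := hcon 3
              have : ∃ i, m i = 2 := by
                by_contra hc
                push Not at hc
                have := hc 0
                have := hc 1
                have := hc 2
                have := hc 3
                omega
              obtain ⟨i, hi⟩ := this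
              apply hm i
              ext j
              by_cases hij : i = j
              · subst hij
                simpa using hi
              · rw [Finsupp.single_eq_of_ne (Ne.symm hij)]
                fin_cases i <;> fin_cases j <;> simp at hi hij ⊢ <;> omega
            have h1 := congrArg (coeff (m - Finsupp.single i 1)) (hd i)
            have hle : Finsupp.single i 1 ≤ m := by simp [hi]
            rw [coeff_pderiv, tsub_add_cancel_of_le hle] at h1
            simpa [hi] using h1
          · exact hPh.coeff_eq_zero hdeg
        · intro i _
          rw [if_neg (fun h => hm ⟨i, h.symm⟩), mul_zero]
  · intro hne w hw
    set v := tripleCoeffVec F with hv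
    have hz : ∀ i l, ∑ j, trip v i j l * w j = 0 := by
      intro i l
      have := congrFun (hw (Pi.single l 1)) i
      rw [hmul] at this
      simpa [Pi.single_apply] using this
    have hv0 : ∃ a, v a ≠ 0 := by
      by_contra hc
      push Not at hc
      apply hne
      intro i j
      rw [hess_eq F hhom]
      refine Finset.sum_eq_zero fun l _ => ?_
      simp [trip, ← hv, hc]
    have hcross : ∀ a b, v a * w b = v b * w a := by
      have e01 := hz 2 3
      have e02 := hz 1 3
      have e03 := hz 1 2
      have e12 := hz 0 3
      have e13 := hz 0 2
      have e23 := hz 0 1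
      simp [Fin.sum_univ_four, trip, show (2 : Fin 4) - 3 = 3 from rfl,
      show (-1 : Fin 4) = 3 from rfl, show (-3 : Fin 4) = 1 from rfl, CharTwo.add_eq_zero] at e01 e02 e03 e12 e13 e23
      intro a b
      fin_cases a <;> fin_cases b <;> simp <;> first | assumption | (symm; assumption)
    obtain ⟨a, ha⟩ := hv0
    refine ⟨w a / v a, ?_⟩
    ext b
    simp only [Pi.smul_apply, smul_eq_mul]
    field_simp
    linear_combination hcross a b
end

section
/- Assume char k = 2. Let F be a nonzero homogeneous polynomial of degree 3 in k[x₀,x₁,x₂,x₃] such that the cubic surface V(F) is smooth, and suppose that for all distinct indices i, j, l the coefficient of the monomial xᵢxⱼx_l in F is 0. Then there exist A ∈ GL₄(k) and c ∈ kˣ such that F(A·x) = c·(x₀³ + x₁³ + x₂³ + x₃³); that is, V(F) is projectively equivalent to the Fermat cubic surface. -/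
open MvPolynomial Matrix

section
open Polynomial

noncomputable def qpol {k : Type*} [Field k] (a : ℕ → k) : ℕ → Polynomial k
  | 0 => Polynomial.C (a 0)
  | n + 1 => Polynomial.X ^ 12 * qpol a n ^ 4 + Polynomial.C (a (n + 1))

lemma qpol_ne {k : Type*} [Field k] (a : ℕ → k) (n : ℕ) (h : ∃ i ≤ n, a i ≠ 0) :
    qpol a n ≠ 0 := by
  induction n with
  | zero =>
    obtain ⟨i, hi, h⟩ := h
    obtain rfl : i = 0 := by omega
    simpa [qpol] using h
  | succ n ih =>
    by_cases h0 : a (n + 1) = 0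
    · have : qpol a n ≠ 0 := by
        apply ih
        obtain ⟨i, hi, h⟩ := h
        refine ⟨i, ?_, h⟩
        by_contra hc
        obtain rfl : i = n + 1 := by omega
        exact h h0
      simp [qpol, h0, this]
    · intro hz
      apply h0
      have := congrArg (Polynomial.eval 0) hz
      simpa [qpol] using this

/-- Solve the recursion `x 0 = a 0 t^4`, `x (i+1) = x i ^ 4 + a (i+1) t^4`, `x n = t`. -/
lemma exists_rec {k : Type*} [Field k] [IsAlgClosed k] (a : ℕ → k) (n : ℕ)
    (h : ∃ i ≤ n, a i ≠ 0) :
    ∃ x : ℕ → k, x n ≠ 0 ∧ x 0 = a 0 * x n ^ 4 ∧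
      ∀ i, x (i + 1) = x i ^ 4 + a (i + 1) * x n ^ 4 := by
  have hQ := qpol_ne a n h
  have hdeg : (Polynomial.X ^ 3 * qpol a n - Polynomial.C 1).degree ≠ 0 := by
    have hd : (Polynomial.C (1 : k)).degree < (Polynomial.X ^ 3 * qpol a n).degree := by
      rw [Polynomial.degree_mul, Polynomial.degree_X_pow, Polynomial.degree_eq_natDegree hQ]
      refine lt_of_le_of_lt Polynomial.degree_C_le ?_
      norm_cast
      omega
    rw [Polynomial.degree_sub_eq_left_of_degree_lt hd, Polynomial.degree_mul,
      Polynomial.degree_X_pow, Polynomial.degree_eq_natDegree hQ]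
    norm_cast
    omega
  obtain ⟨t, ht⟩ := IsAlgClosed.exists_root _ hdeg
  have ht' : t ^ 3 * (qpol a n).eval t = 1 := by
    have := ht
    simp [Polynomial.IsRoot] at this
    linear_combination this
  have hn : t ^ 4 * (qpol a n).eval t = t := by linear_combination t * ht'
  refine ⟨fun i => t ^ 4 * (qpol a i).eval t, ?_, ?_, ?_⟩
  · simp only [hn]
    rintro rfl
    simp at ht'
  · simp only [hn]; simp [qpol]; ring
  · intro i
    simp only [hn]; simp [qpol]; ring

end

section
variable {k : Type*} [Field k] [IsAlgClosed k] {V : Type*} [AddCommGroup V] [Module k V]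
  [FiniteDimensional k V] {σ : k →+* k}

lemma exists_fixed (hσ : ∀ c, σ c = c ^ 4) [Nontrivial V] (φ : V →ₛₗ[σ] V)
    (hinj : ∀ v, φ v = 0 → v = 0) : ∃ u : V, u ≠ 0 ∧ φ u = u := by
  classical
  obtain ⟨v, hv⟩ := exists_ne (0 : V)
  have hiter : ∀ n, (φ)^[n] v ≠ 0 := by
    intro n
    induction n with
    | zero => simpa using hv
    | succ n ih => rw [Function.iterate_succ_apply']; exact fun h => ih (hinj _ h)
  have hex : ∃ n, ¬ LinearIndependent k (fun i : Fin n => (φ)^[i] v) := by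
    refine ⟨Module.finrank k V + 1, fun h => ?_⟩
    have := h.fintype_card_le_finrank
    simp at this
  obtain ⟨m, hm, hmin⟩ : ∃ m, ¬ LinearIndependent k (fun i : Fin (m+1) => (φ)^[i] v) ∧
      LinearIndependent k (fun i : Fin m => (φ)^[i] v) := by
    have h1 := Nat.find_spec hex
    have h2 := fun m hm => Nat.find_min hex (m := m) hm
    rcases hN : Nat.find hex with _ | m
    · rw [hN] at h1
      exact absurd (linearIndependent_empty_type) h1
    · rw [hN] at h1 h2
      exact ⟨m, h1, not_not.mp (h2 m (by omega))⟩
  have hspan : (φ)^[m] v ∈ Submodule.span k (Set.range (fun i : Fin m => (φ)^[i] v)) := by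
    by_contra hc
    apply hm
    rw [linearIndependent_finSucc']
    exact ⟨hmin, hc⟩
  obtain ⟨a', ha'⟩ := (Submodule.mem_span_range_iff_exists_fun k).mp hspan
  obtain ⟨a, ha⟩ : ∃ a : ℕ → k, ∑ i ∈ Finset.range m, a i • (φ)^[i] v = (φ)^[m] v := by
    refine ⟨fun i => if h : i < m then a' ⟨i, h⟩ else 0, ?_⟩
    rw [← ha', Finset.sum_range]
    simp
  rcases m with _ | n
  · simp at ha
    exact absurd ha.symm hv
  have hne : ∃ i ≤ n, a i ≠ 0 := by
    by_contra hc
    push Not at hc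
    apply hiter (n+1)
    rw [← ha]
    apply Finset.sum_eq_zero
    intro i hi
    rw [hc i (by simp at hi; omega), zero_smul]
  obtain ⟨x, hxn, hx0, hxs⟩ := exists_rec a n hne
  refine ⟨∑ i ∈ Finset.range (n+1), x i • (φ)^[i] v, ?_, ?_⟩
  · intro h
    rw [Finset.sum_range] at h
    have := Fintype.linearIndependent_iff.mp hmin (fun i => x i) h (Fin.last n)
    exact hxn (by simpa using this)
  · have e1 : φ (∑ i ∈ Finset.range (n+1), x i • (φ)^[i] v) =
        ∑ i ∈ Finset.range (n+1), x i ^ 4 • (φ)^[i+1] v := by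
      rw [map_sum]
      refine Finset.sum_congr rfl fun i _ => ?_
      rw [φ.map_smulₛₗ, hσ, Function.iterate_succ_apply']
    rw [e1, Finset.sum_range_succ, ← ha, Finset.smul_sum, Finset.sum_range_succ', ← add_assoc,
      ← Finset.sum_add_distrib, Finset.sum_range_succ' _ n, hx0]
    congr 1
    · refine Finset.sum_congr rfl fun i _ => ?_
      rw [hxs i, add_smul, smul_smul, mul_comm (a (i+1))]
    · rw [smul_smul, mul_comm]

lemma exists_t (c : k) [CharP k 2] : ∃ t : k, t ^ 4 + t = c := by
  have hdeg : (Polynomial.X ^ 4 + Polynomial.X - Polynomial.C c : Polynomial k).degree ≠ 0 := by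
    have : (Polynomial.X ^ 4 + Polynomial.X - Polynomial.C c : Polynomial k).degree = 4 := by
      compute_degree!
    rw [this]; norm_num
  obtain ⟨t, ht⟩ := IsAlgClosed.exists_root _ hdeg
  refine ⟨t, ?_⟩
  simp [Polynomial.IsRoot] at ht
  linear_combination ht

lemma span_fixed [CharP k 2] (hσ : ∀ c, σ c = c ^ 4) (φ : V →ₛₗ[σ] V)
    (hinj : ∀ v, φ v = 0 → v = 0) : Submodule.span k {v : V | φ v = v} = ⊤ := by
  classical
  set W := Submodule.span k {v : V | φ v = v} with hW
  have hstable : ∀ w ∈ W, φ w ∈ W := by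
    intro w hw
    induction hw using Submodule.span_induction with
    | mem x hx => rw [show φ x = x from hx]; exact Submodule.subset_span hx
    | zero => simp
    | add x y _ _ hx hy => rw [map_add]; exact W.add_mem hx hy
    | smul c x _ hx => rw [φ.map_smulₛₗ]; exact W.smul_mem _ hx
  have hroot : ∀ w ∈ W, ∃ w' ∈ W, φ w' = w := by
    intro w hw
    induction hw using Submodule.span_induction with
    | mem x hx => exact ⟨x, Submodule.subset_span hx, hx⟩
    | zero => exact ⟨0, W.zero_mem, map_zero _⟩
    | add x y _ _ hx hy =>
      obtain ⟨x', h1, h2⟩ := hx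
      obtain ⟨y', h3, h4⟩ := hy
      exact ⟨x' + y', W.add_mem h1 h3, by rw [map_add, h2, h4]⟩
    | smul c x _ hx =>
      obtain ⟨x', h1, h2⟩ := hx
      obtain ⟨d, hd⟩ := IsAlgClosed.exists_pow_nat_eq c (n := 4) (by norm_num)
      exact ⟨d • x', W.smul_mem _ h1, by rw [φ.map_smulₛₗ, hσ, hd, h2]⟩
  have hsolve' : ∀ w ∈ W, ∀ c : k, ∃ w' ∈ W, φ w' + w' = c • w := by
    intro w hw
    induction hw using Submodule.span_induction with
    | mem x hx =>
      intro c
      obtain ⟨t, ht⟩ := exists_t c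
      refine ⟨t • x, W.smul_mem _ (Submodule.subset_span hx), ?_⟩
      rw [φ.map_smulₛₗ, hσ, show φ x = x from hx, ← add_smul, ht]
    | zero => exact fun c => ⟨0, W.zero_mem, by simp⟩
    | add x y _ _ hx hy =>
      intro c
      obtain ⟨x', h1, h2⟩ := hx c
      obtain ⟨y', h3, h4⟩ := hy c
      exact ⟨x' + y', W.add_mem h1 h3, by rw [map_add, smul_add, ← h2, ← h4]; abel⟩
    | smul d x hxm hx =>
      intro c
      rw [smul_smul]
      exact hx (c * d)
  have hsolve : ∀ w ∈ W, ∃ w' ∈ W, φ w' + w' = w := fun w hw => by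
    simpa using hsolve' w hw 1
  by_contra hne
  have : Nontrivial (V ⧸ W) := Submodule.Quotient.nontrivial_iff.mpr hne
  let ψ : (V ⧸ W) →ₛₗ[σ] (V ⧸ W) := W.mapQ W φ (fun w hw => hstable w hw)
  obtain ⟨u, hu0, hu⟩ := exists_fixed hσ ψ (by
    intro v hv
    obtain ⟨v, rfl⟩ := W.mkQ_surjective v
    have h1 : φ v ∈ W := by
      simpa [ψ, Submodule.Quotient.mk_eq_zero] using hv
    obtain ⟨w, hw, hw'⟩ := hroot _ h1
    have h2 := hinj (v - w) (by rw [map_sub, hw', sub_self])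
    rw [sub_eq_zero] at h2
    subst h2
    simpa using hw)
  obtain ⟨u, rfl⟩ := W.mkQ_surjective u
  have h1 : φ u - u ∈ W := by
    rw [← Submodule.Quotient.eq]
    simpa [ψ] using hu
  obtain ⟨w, hw, hw'⟩ := hsolve _ h1
  have h2 : (2 : k) = 0 := by exact_mod_cast CharP.cast_eq_zero k 2
  have hww : w + w = 0 := by rw [← two_smul k w, h2, zero_smul]
  have hfix : φ (u + w) = u + w := by
    rw [map_add]
    have e : φ w = φ u - u - w := by rw [← hw']; abel
    have huu : φ u + φ u = 0 := by rw [← two_smul k, h2, zero_smul]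
    have huu' : u + u = 0 := by rw [← two_smul k, h2, zero_smul]
    rw [e, show φ u + (φ u - u - w) = (φ u + φ u) - (u + u) - (w + w) + (u + w) by abel,
      huu, huu', hww]
    simp
  have h3 : u + w ∈ W := Submodule.subset_span hfix
  apply hu0
  have : u ∈ W := by simpa using W.sub_mem h3 hw
  simpa using this
end

section
variable {k : Type*} [Field k] [IsAlgClosed k] {V : Type*} [AddCommGroup V] [Module k V]
  [FiniteDimensional k V] {σ : k →+* k}

lemma exists_omega : ∃ w : k, w ^ 2 + w + 1 = 0 := by
  have hdeg : (Polynomial.X ^ 2 + Polynomial.X + Polynomial.C 1 : Polynomial k).degree ≠ 0 := by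
    have : (Polynomial.X ^ 2 + Polynomial.X + Polynomial.C 1 : Polynomial k).degree = 2 := by
      compute_degree!
    rw [this]; norm_num
  obtain ⟨t, ht⟩ := IsAlgClosed.exists_root _ hdeg
  refine ⟨t, ?_⟩
  simp [Polynomial.IsRoot] at ht
  linear_combination ht

lemma exists_orthonormal [CharP k 2] (hσ : ∀ c, σ c = c ^ 4) (φ : V →ₛₗ[σ] V)
    (hinj : ∀ v, φ v = 0 → v = 0) (h : V →ₛₗ[frobenius k 2] V →ₗ[k] k)
    (hnd : ∀ v, (∀ y, h v y = 0) → v = 0)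
    (hφ : ∀ v y, h y (φ v) = (h v y) ^ 2) (m : ℕ) (hm : m ≤ Module.finrank k V) :
    ∃ e : Fin m → V, (∀ i, φ (e i) = e i) ∧ ∀ i j, h (e i) (e j) = if i = j then 1 else 0 := by
  classical
  have h2 : (2 : k) = 0 := by exact_mod_cast CharP.cast_eq_zero k 2
  have hsp := span_fixed hσ φ hinj
  have hsw : ∀ v w, φ v = v → h w v = (h v w) ^ 2 := fun v w hv => by
    rw [← hφ, hv]
  have hsm : ∀ (c : k) v w, h (c • v) w = c ^ 2 * h v w := fun c v w => by
    rw [h.map_smulₛₗ]; simp [frobenius_def]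
  induction m with
  | zero => exact ⟨Fin.elim0, fun i => i.elim0, fun i => i.elim0⟩
  | succ m ih =>
    obtain ⟨e, he, heo⟩ := ih (by omega)
    let P : V → V := fun v => v - ∑ i, h (e i) v • e i
    have hP : ∀ v, P v = v - ∑ i, h (e i) v • e i := fun v => rfl
    have hPfix : ∀ v, φ v = v → φ (P v) = P v := by
      intro v hv
      rw [hP, map_sub, map_sum, hv]
      congr 1
      refine Finset.sum_congr rfl fun i _ => ?_
      rw [φ.map_smulₛₗ, he, hσ]
      congr 1
      have a1 := hsw v (e i) hv
      have a2 := hsw (e i) v (he i)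
      rw [a2] at a1
      rw [← pow_mul] at a1
      exact a1.symm
    have hPr : ∀ v i, h (e i) (P v) = 0 := by
      intro v i
      rw [hP]
      simp [map_sub, map_sum, heo]
    have hPl : ∀ v, φ v = v → ∀ i, h (P v) (e i) = 0 := by
      intro v hv i
      have a := hsw (e i) (P v) (he i)
      rw [a, hPr]; simp
    obtain ⟨v, hv, hvn⟩ : ∃ v, φ v = v ∧ h (P v) (P v) ≠ 0 := by
      by_contra hc
      push Not at hc
      obtain ⟨ω, hω⟩ := exists_omega (k := k)
      have hω4 : ω ^ 4 = ω := by linear_combination (ω ^ 2 - ω) * hω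
      have hsumP : ∀ v w (c : k), P (v + c • w) = P v + c • P w := by
        intro v w c
        simp only [hP, map_add, map_smul, add_smul, Finset.sum_add_distrib, smul_sub,
          Finset.smul_sum, smul_smul, smul_eq_mul]
        abel
      have key : ∀ v w, φ v = v → φ w = w → ∀ c : k, c ^ 4 = c →
          c * h (P v) (P w) + c ^ 2 * h (P w) (P v) = 0 := by
        intro v w hv hw c hcc
        have := hc (v + c • w) (by rw [map_add, φ.map_smulₛₗ, hσ, hcc, hv, hw])
        rw [hsumP, map_add h, LinearMap.add_apply, map_add, map_add, hsm, hsm, map_smul, map_smul,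
          hc v hv, hc w hw] at this
        simp only [smul_eq_mul, mul_zero, zero_add, add_zero] at this
        exact this
      have hz : ∀ v w, φ v = v → φ w = w → h (P v) (P w) = 0 := by
        intro v w hv hw
        have a1 := key v w hv hw 1 (by simp)
        have a2 := key v w hv hw ω hω4
        linear_combination (-ω ^ 2) * a1 + a2 + (h (P v) (P w)) * hω - ω * h (P v) (P w) * h2
      have hP0 : ∀ v, φ v = v → P v = 0 := by
        intro v hv
        apply hnd
        have hle : Submodule.span k {v : V | φ v = v} ≤ LinearMap.ker (h (P v)) := by
          rw [Submodule.span_le]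
          intro w hw
          have a := hz v w hv hw
          rw [hP w, map_sub, map_sum] at a
          simpa [hPl v hv] using a
        intro y
        have : y ∈ LinearMap.ker (h (P v)) := hle (by rw [hsp]; trivial)
        simpa using this
      have hle : Submodule.span k {v : V | φ v = v} ≤ Submodule.span k (Set.range e) := by
        rw [Submodule.span_le]
        intro w hw
        have a := hP0 w hw
        rw [hP, sub_eq_zero] at a
        rw [a]
        exact Submodule.sum_mem _ fun i _ =>
          Submodule.smul_mem _ _ (Submodule.subset_span ⟨i, rfl⟩)
      rw [hsp, top_le_iff] at hle
      have := finrank_range_le_card (R := k) e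
      rw [Set.finrank, hle, finrank_top] at this
      simp at this
      omega
    have hv1 : h (P v) (P v) = 1 := by
      have a := hsw (P v) (P v) (hPfix v hv)
      have : h (P v) (P v) * (h (P v) (P v) - 1) = 0 := by linear_combination -a
      rcases mul_eq_zero.mp this with h' | h'
      · exact absurd h' hvn
      · linear_combination h'
    refine ⟨Fin.snoc e (P v), ?_, ?_⟩
    · intro i
      induction i using Fin.lastCases with
      | last => simpa using hPfix v hv
      | cast i => simpa using he i
    · intro i j
      induction i using Fin.lastCases with
      | last =>
        induction j using Fin.lastCases with
        | last => simpa using hv1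
        | cast j => simpa [(Fin.castSucc_lt_last j).ne'] using hPl v hv j
      | cast i =>
        induction j using Fin.lastCases with
        | last => simpa [(Fin.castSucc_lt_last i).ne] using hPr v i
        | cast j => simpa using heo i j
end

section
variable {k : Type*} [Field k]

/-- matrix form of the previous result -/
lemma matrix_orthonormal [IsAlgClosed k] [CharP k 2] {n : ℕ} (M : Matrix (Fin n) (Fin n) k)
    (hM : IsUnit M.det) : ∃ e : Fin n → Fin n → k, ∀ i j,
      ∑ p, ∑ q, M p q * e i p ^ 2 * e j q = if i = j then 1 else 0 := by
  let fr := frobenius k 2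
  let σ : k →+* k := fr.comp fr
  have hσ : ∀ c, σ c = c ^ 4 := fun c => by
    simp only [σ, fr, RingHom.comp_apply, frobenius_def]; ring
  let h : (Fin n → k) →ₛₗ[frobenius k 2] (Fin n → k) →ₗ[k] k :=
    LinearMap.mk₂'ₛₗ (frobenius k 2) (RingHom.id k)
      (fun x y => ∑ p, ∑ q, M p q * x p ^ 2 * y q)
      (by
        intro x x' y
        simp only [← Finset.sum_add_distrib, Pi.add_apply, add_pow_char]
        refine Finset.sum_congr rfl fun p _ => Finset.sum_congr rfl fun q _ => ?_
        ring)
      (by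
        intro c x y
        simp only [Pi.smul_apply, smul_eq_mul, Finset.mul_sum, frobenius_def]
        refine Finset.sum_congr rfl fun p _ => Finset.sum_congr rfl fun q _ => ?_
        ring)
      (by
        intro x y y'
        simp only [← Finset.sum_add_distrib, Pi.add_apply]
        refine Finset.sum_congr rfl fun p _ => Finset.sum_congr rfl fun q _ => ?_
        ring)
      (by
        intro c x y
        simp only [Pi.smul_apply, smul_eq_mul, Finset.mul_sum, RingHom.id_apply]
        refine Finset.sum_congr rfl fun p _ => Finset.sum_congr rfl fun q _ => ?_
        ring)
  have hh : ∀ x y, h x y = ∑ p, ∑ q, M p q * x p ^ 2 * y q := fun x y => rfl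
  have hh1 : ∀ x y, h x y = (fun p => x p ^ 2) ⬝ᵥ (M *ᵥ y) := by
    intro x y
    rw [hh]
    simp only [dotProduct, mulVec, Finset.mul_sum]
    refine Finset.sum_congr rfl fun p _ => Finset.sum_congr rfl fun q _ => ?_
    ring
  let N : Matrix (Fin n) (Fin n) k := M⁻¹ * (M.map fr)ᵀ
  have hN : IsUnit N.det := by
    simp only [N, det_mul, det_transpose]
    refine IsUnit.mul (by simpa using hM) ?_
    have : (M.map fr).det = fr M.det := by rw [RingHom.map_det]; rfl
    rw [this]
    exact hM.map fr
  let φ : (Fin n → k) →ₛₗ[σ] (Fin n → k) :=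
    { toFun := fun x => N *ᵥ (fun p => σ (x p))
      map_add' := by
        intro x y
        rw [← mulVec_add]
        congr 1
        ext p
        simp
      map_smul' := by
        intro c x
        rw [← mulVec_smul]
        congr 1
        ext p
        simp }
  have hφd : ∀ x, φ x = N *ᵥ (fun p => σ (x p)) := fun x => rfl
  have hinj : ∀ v, φ v = 0 → v = 0 := by
    intro v hv
    have := Matrix.eq_zero_of_mulVec_eq_zero hN.ne_zero hv
    ext p
    have := congrFun this p
    simpa using this
  have hnd : ∀ v, (∀ y, h v y = 0) → v = 0 := by
    intro v hv
    have : (fun p => v p ^ 2) ᵥ* M = 0 := by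
      ext j
      have := hv (Pi.single j 1)
      rw [hh1, dotProduct_mulVec] at this
      simpa using this
    have := Matrix.eq_zero_of_vecMul_eq_zero hM.ne_zero this
    ext p
    have := congrFun this p
    simpa using this
  have hφ : ∀ v y, h y (φ v) = (h v y) ^ 2 := by
    intro v y
    rw [hh1, hφd, mulVec_mulVec]
    simp only [N]
    rw [← Matrix.mul_assoc, Matrix.mul_nonsing_inv _ hM, Matrix.one_mul, hh]
    rw [← frobenius_def, map_sum]
    simp only [map_sum, map_mul, dotProduct, mulVec, transpose_apply, map_apply, Finset.mul_sum]
    rw [Finset.sum_comm]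
    refine Finset.sum_congr rfl fun p _ => Finset.sum_congr rfl fun q _ => ?_
    simp only [hσ, fr, frobenius_def]
    ring
  obtain ⟨e, -, he⟩ := exists_orthonormal hσ φ hinj h hnd hφ n (by simp)
  exact ⟨e, fun i j => by rw [← he, hh]⟩

lemma F_eq (F : MvPolynomial (Fin 4) k) (hhom : F.IsHomogeneous 3)
    (hcoeff : ∀ i j l : Fin 4, i ≠ j → i ≠ l → j ≠ l →
      F.coeff (Finsupp.single i 1 + Finsupp.single j 1 + Finsupp.single l 1) = 0) :
    F = ∑ i, ∑ j, monomial (Finsupp.single i 2 + Finsupp.single j 1)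
      (F.coeff (Finsupp.single i 2 + Finsupp.single j 1)) := by
  classical
  ext m
  simp only [coeff_sum, coeff_monomial]
  have hform : ∀ i j : Fin 4, (Finsupp.single i 2 + Finsupp.single j 1 : Fin 4 →₀ ℕ).degree = 3 := by
    intro i j; simp
  by_cases hd : m.degree = 3
  swap
  · rw [hhom.coeff_eq_zero hd]
    symm
    refine Finset.sum_eq_zero fun i _ => Finset.sum_eq_zero fun j _ => ?_
    rw [if_neg]
    rintro rfl
    exact hd (hform i j)
  have hinj : ∀ i j i' j' : Fin 4, (Finsupp.single i' 2 + Finsupp.single j' 1 : Fin 4 →₀ ℕ) =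
      Finsupp.single i 2 + Finsupp.single j 1 → i' = i ∧ j' = j := by
    intro i j i' j' hij
    have h1 := DFunLike.congr_fun hij i
    have hii : i' = i := by
      by_contra hne
      simp only [Finsupp.add_apply, Finsupp.single_apply, if_neg hne, if_true] at h1
      split_ifs at h1 <;> omega
    subst hii
    exact ⟨rfl, Finsupp.single_left_injective one_ne_zero (add_left_cancel hij)⟩
  have hcase : (∃ i j, m = Finsupp.single i 2 + Finsupp.single j 1) ∨
      ∃ i j l, i ≠ j ∧ i ≠ l ∧ j ≠ l ∧
        m = Finsupp.single i 1 + Finsupp.single j 1 + Finsupp.single l 1 := by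
    have hc : (Finsupp.toMultiset m).card = 3 := by
      rw [Finsupp.card_toMultiset, ← hd]; rfl
    obtain ⟨x, y, z, hxyz⟩ := Multiset.card_eq_three.mp hc
    have hm : m = Finsupp.single x 1 + Finsupp.single y 1 + Finsupp.single z 1 := by
      apply Multiset.toFinsupp.symm.injective
      change Finsupp.toMultiset m = Finsupp.toMultiset _
      rw [hxyz]
      simp [Finsupp.toMultiset_single]
    have two : ∀ i : Fin 4, (Finsupp.single i 2 : Fin 4 →₀ ℕ) =
      Finsupp.single i 1 + Finsupp.single i 1 := fun i => by rw [← Finsupp.single_add]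
    by_cases h1 : x = y
    · left; refine ⟨x, z, ?_⟩; rw [hm, two, h1]
    by_cases h2 : x = z
    · left; refine ⟨x, y, ?_⟩; rw [hm, two, h2]; abel
    by_cases h3 : y = z
    · left; refine ⟨y, x, ?_⟩; rw [hm, two, h3]; abel
    exact Or.inr ⟨x, y, z, h1, h2, h3, hm⟩
  rcases hcase with ⟨i, j, rfl⟩ | ⟨i, j, l, hij, hil, hjl, rfl⟩
  · rw [Finset.sum_eq_single i, Finset.sum_eq_single j]
    · simp
    · intro j' _ hj'
      rw [if_neg]
      intro hh
      exact hj' (hinj _ _ _ _ hh).2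
    · simp
    · intro i' _ hi'
      refine Finset.sum_eq_zero fun j' _ => ?_
      rw [if_neg]
      intro hh
      exact hi' (hinj _ _ _ _ hh).1
    · simp
  · rw [hcoeff i j l hij hil hjl]
    symm
    refine Finset.sum_eq_zero fun i' _ => Finset.sum_eq_zero fun j' _ => ?_
    rw [if_neg]
    intro hh
    have h1 := DFunLike.congr_fun hh i'
    simp only [Finsupp.add_apply, Finsupp.single_apply] at h1
    split_ifs at h1 with a1 a2 a3 a4 a5 a6 a7 <;> first | omega | grind
end

/-- In characteristic 2, a smooth cubic surface all of whose
coefficients of squarefree cubic monomials `xᵢxⱼx_l` vanish (i.e. with no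
canonical point) is projectively equivalent to the Fermat cubic surface. -/
theorem stmt9 {k : Type*} [Field k] [IsAlgClosed k] (hchar : ringChar k = 2)
    (F : MvPolynomial (Fin 4) k) (hF0 : F ≠ 0) (hhom : F.IsHomogeneous 3)
    (hsmooth : ∀ x : Fin 4 → k,
      eval x F = 0 → (∀ i, eval x (pderiv i F) = 0) → x = 0)
    (hcoeff : ∀ i j l : Fin 4, i ≠ j → i ≠ l → j ≠ l →
      F.coeff (Finsupp.single i 1 + Finsupp.single j 1 + Finsupp.single l 1) = 0) :
    ∃ (A : Matrix (Fin 4) (Fin 4) k) (c : kˣ), IsUnit A.det ∧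
      substMatrix A F =
        (c : k) • (X 0 ^ 3 + X 1 ^ 3 + X 2 ^ 3 + X 3 ^ 3 :
          MvPolynomial (Fin 4) k) := by
  classical
  have : CharP k 2 := ringChar.of_eq hchar
  have h2 : (2 : k) = 0 := by exact_mod_cast CharP.cast_eq_zero k 2
  let M : Matrix (Fin 4) (Fin 4) k :=
    fun i j => F.coeff (Finsupp.single i 2 + Finsupp.single j 1)
  have hF : F = ∑ i, ∑ j, C (M i j) * X i ^ 2 * X j := by
    conv_lhs => rw [F_eq F hhom hcoeff]
    refine Finset.sum_congr rfl fun i _ => Finset.sum_congr rfl fun j _ => ?_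
    rw [X_pow_eq_monomial, X, C_mul_monomial, monomial_mul]
    simp [M]
  clear_value M
  have hder : ∀ x l, eval x (pderiv l F) = ∑ i, M i l * x i ^ 2 := by
    intro x l
    rw [hF]
    simp only [map_sum, Derivation.leibniz, pderiv_C, Derivation.leibniz_pow, pderiv_X,
      smul_eq_mul, map_add, map_mul, eval_C, eval_X, map_pow, nsmul_eq_mul]
    refine Finset.sum_congr rfl fun i _ => ?_
    simp [Pi.single_apply, h2, apply_ite]
  have hev : ∀ x, eval x F = ∑ l, x l * eval x (pderiv l F) := by
    intro x
    simp only [hder, Finset.mul_sum]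
    rw [hF, Finset.sum_comm]
    simp only [map_sum, map_mul, eval_C, eval_X, map_pow]
    refine Finset.sum_congr rfl fun i _ => Finset.sum_congr rfl fun j _ => ?_
    ring
  have hM : IsUnit M.det := by
    rw [isUnit_iff_ne_zero]
    intro h0
    obtain ⟨w, hw, hw0⟩ := Matrix.exists_vecMul_eq_zero_iff.mpr h0
    choose x hx using fun i => IsAlgClosed.exists_pow_nat_eq (w i) (n := 2) (by norm_num)
    have hd : ∀ l, eval x (pderiv l F) = 0 := by
      intro l
      rw [hder]
      have := congrFun hw0 l
      simp only [vecMul, dotProduct, Pi.zero_apply] at this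
      rw [← this]
      refine Finset.sum_congr rfl fun i _ => ?_
      rw [hx, mul_comm]
    have hx0 := hsmooth x (by rw [hev]; simp [hd]) hd
    apply hw
    ext i
    rw [← hx i, hx0]
    simp
  obtain ⟨e, he⟩ := matrix_orthonormal M hM
  refine ⟨fun p i => e i p, 1, ?_, ?_⟩
  · have hprod : ((Matrix.of fun i p => e i p ^ 2) * M) * (Matrix.of fun p i => e i p) = 1 := by
      ext i j
      rw [Matrix.one_apply, ← he i j]
      simp only [Matrix.mul_apply, Matrix.of_apply, Finset.sum_mul]
      rw [Finset.sum_comm]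
      refine Finset.sum_congr rfl fun p _ => Finset.sum_congr rfl fun q _ => ?_
      ring
    exact (Matrix.isUnit_iff_isUnit_det _).mp (IsUnit.of_mul_eq_one_right _ hprod)
  · have : CharP (MvPolynomial (Fin 4) k) 2 := inferInstance
    have hsq : ∀ p, (∑ j, C (e j p) * X j : MvPolynomial (Fin 4) k) ^ 2 =
        ∑ j, C (e j p ^ 2) * X j ^ 2 := by
      intro p
      rw [← frobenius_def, map_sum]
      refine Finset.sum_congr rfl fun j _ => ?_
      rw [frobenius_def, mul_pow, C_pow]
    have hgoal : substMatrix (fun p i => e i p) F =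
        ∑ i, ∑ j, C (∑ p, ∑ q, M p q * e i p ^ 2 * e j q) * (X i ^ 2 * X j) := by
      unfold substMatrix
      rw [hF]
      simp only [map_sum, map_mul, map_pow, aeval_X, aeval_C, algebraMap_eq]
      simp only [hsq, Finset.sum_mul, Finset.mul_sum]
      calc _ = ∑ p, ∑ q, ∑ i, ∑ j, C (M p q) * C (e i p) ^ 2 * C (e j q) * (X i ^ 2 * X j) := by
            refine Finset.sum_congr rfl fun p _ => Finset.sum_congr rfl fun q _ => ?_
            rw [Finset.sum_comm]
            refine Finset.sum_congr rfl fun i _ => Finset.sum_congr rfl fun j _ => ?_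
            rw [C_pow]; ring
        _ = ∑ p, ∑ i, ∑ q, ∑ j, C (M p q) * C (e i p) ^ 2 * C (e j q) * (X i ^ 2 * X j) :=
            Finset.sum_congr rfl fun p _ => Finset.sum_comm
        _ = ∑ i, ∑ p, ∑ q, ∑ j, C (M p q) * C (e i p) ^ 2 * C (e j q) * (X i ^ 2 * X j) :=
            Finset.sum_comm
        _ = ∑ i, ∑ p, ∑ j, ∑ q, C (M p q) * C (e i p) ^ 2 * C (e j q) * (X i ^ 2 * X j) :=
            Finset.sum_congr rfl fun i _ => Finset.sum_congr rfl fun p _ => Finset.sum_comm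
        _ = _ := Finset.sum_congr rfl fun i _ => Finset.sum_comm
    rw [hgoal]
    simp only [he]
    simp [Fin.sum_univ_four]
    ring
end
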